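/- arXiv:2211.14140 — 2 statements merged into one kernel-verified Lean document; each statement's English description precedes it below -/
import Mathlib

section
/- Let Φ = {φ₁,…,φ_k} be an injective IFS (each φ_i an injective Lipschitz contraction of ℝ) and a ∈ Ω_k. Then the set of parameters δ ∈ ℝ for which the piecewise contraction f_{Φ,a+δ} is not asymptotically periodic has Hausdorff dimension zero. -/
open Filter Set Topology
open scoped NNReal

noncomputable def pcIdx {k : ℕ} (hk : 2 ≤ k) (a : Fin (k-1) → ℝ) (x : ℝ) : Fin k :=
  ⟨(Finset.univ.filter fun i => a i ≤ x).card, by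
    have h := Finset.card_filter_le (Finset.univ : Finset (Fin (k-1))) (fun i => a i ≤ x)
    simp only [Finset.card_univ, Fintype.card_fin] at h
    omega⟩

/-- The piecewise contraction `f_{Φ,a}` determined by the IFS `φ` and partition points `a`. -/
noncomputable def pc {k : ℕ} (hk : 2 ≤ k) (φ : Fin k → ℝ → ℝ) (a : Fin (k-1) → ℝ) (x : ℝ) : ℝ :=
  φ (pcIdx hk a x) x

/-- `φ_ω = φ_{ω_n} ∘ ⋯ ∘ φ_{ω_1}`. -/
def wcomp {k : ℕ} (φ : Fin k → ℝ → ℝ) {n : ℕ} (ω : Fin n → Fin k) (x : ℝ) : ℝ :=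
  (List.ofFn ω).foldl (fun y i => φ i y) x

/-- `(Φ,a)` has a singular connection: `φ_ω(S_a) ∩ S_a ≠ ∅` for some nonempty word `ω`. -/
def hasSingConn {k : ℕ} (φ : Fin k → ℝ → ℝ) (a : Fin (k-1) → ℝ) : Prop :=
  ∃ n : ℕ, ∃ ω : Fin (n+1) → Fin k, ∃ i j : Fin (k-1), wcomp φ ω (a i) = a j

/-- `max_i |z i|`. -/
noncomputable def maxAbs {k : ℕ} (hk : 2 ≤ k) (z : Fin k → ℝ) : ℝ :=
  Finset.univ.sup' (Finset.univ_nonempty_iff.mpr ⟨⟨0, by omega⟩⟩) fun i => |z i|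

/-- The set of itineraries of order `n` of `(Φ,a)`. -/
noncomputable def itin {k : ℕ} (hk : 2 ≤ k) (φ : Fin k → ℝ → ℝ) (a : Fin (k-1) → ℝ) (n : ℕ) :
    Set (Fin n → Fin k) :=
  {ω | ∃ x : ℝ, (∀ j < n, (pc hk φ a)^[j] x ∉ Set.range a) ∧
       ∀ j : Fin n, ω j = pcIdx hk a ((pc hk φ a)^[(j : ℕ)] x)}

/-- `I^{(n)}_{Φ,a}(ε) = ⋃_{|δ| ≤ ε} I^{(n)}_{Φ,a+δ}`. -/
noncomputable def itinE {k : ℕ} (hk : 2 ≤ k) (φ : Fin k → ℝ → ℝ) (a : Fin (k-1) → ℝ)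
    (ε : ℝ) (n : ℕ) : Set (Fin n → Fin k) :=
  {ω | ∃ δ : ℝ, |δ| ≤ ε ∧ ω ∈ itin hk φ (fun i => a i + δ) n}

/-- `Ω^ε_{Φ,a} = ⋂_{m ≥ 1} closure (⋃_{n ≥ m} ⋃_{ω ∈ I^{(n)}(ε)} {φ_ω(0)})`. -/
noncomputable def omegaSet {k : ℕ} (hk : 2 ≤ k) (φ : Fin k → ℝ → ℝ) (a : Fin (k-1) → ℝ)
    (ε : ℝ) : Set ℝ :=
  ⋂ m : ℕ, closure {y : ℝ | ∃ n, m ≤ n ∧ ∃ ω ∈ itinE hk φ a ε n, wcomp φ ω 0 = y}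

/-- The ω-limit set of `x` under `f`. -/
def omegaLimitPt (f : ℝ → ℝ) (x : ℝ) : Set ℝ :=
  {y | MapClusterPt y Filter.atTop fun n => f^[n] x}

/-- `f` is asymptotically periodic. -/
def AsympPeriodic (f : ℝ → ℝ) : Prop :=
  {x : ℝ | ∃ p : ℕ, 1 ≤ p ∧ f^[p] x = x}.Finite ∧
  ∀ x : ℝ, ∃ z : ℝ, ∃ p : ℕ, 1 ≤ p ∧ f^[p] z = z ∧
    omegaLimitPt f x = Set.range fun j : Fin p => f^[(j : ℕ)] z

/-- `f` is asymptotically periodic on the invariant set `s`. -/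
def AsympPeriodicOn (f : ℝ → ℝ) (s : Set ℝ) : Prop :=
  {x ∈ s | ∃ p : ℕ, 1 ≤ p ∧ f^[p] x = x}.Finite ∧
  ∀ x ∈ s, ∃ z : ℝ, ∃ p : ℕ, 1 ≤ p ∧ f^[p] z = z ∧
    omegaLimitPt f x = Set.range fun j : Fin p => f^[(j : ℕ)] z

section Aux

variable {k : ℕ}

/-- The length `n` itinerary, as a list. -/
def wd (f : ℝ → ℝ) (c : ℝ → Fin k) : ℕ → ℝ → List (Fin k)
  | 0, _ => []
  | n + 1, x => c x :: wd f c n (f x)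

/-- Composition along a list. -/
def lcomp (φ : Fin k → ℝ → ℝ) : List (Fin k) → ℝ → ℝ
  | [], x => x
  | i :: l, x => lcomp φ l (φ i x)

lemma wd_length (f : ℝ → ℝ) (c : ℝ → Fin k) (n : ℕ) (x : ℝ) : (wd f c n x).length = n := by
  induction n generalizing x with
  | zero => rfl
  | succ n ih => simp [wd, ih]

lemma wd_add (f : ℝ → ℝ) (c : ℝ → Fin k) (m n : ℕ) (x : ℝ) :
    wd f c (m + n) x = wd f c m x ++ wd f c n (f^[m] x) := by
  induction m generalizing x with
  | zero => simp [wd]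
  | succ m ih =>
    have : m + 1 + n = (m + n) + 1 := by omega
    rw [this]
    simp [wd, ih]

lemma lcomp_wd (φ : Fin k → ℝ → ℝ) (f : ℝ → ℝ) (c : ℝ → Fin k) (hf : ∀ x, f x = φ (c x) x)
    (n : ℕ) (x : ℝ) : lcomp φ (wd f c n x) x = f^[n] x := by
  induction n generalizing x with
  | zero => rfl
  | succ n ih => simp [wd, lcomp, ← hf, ih]

lemma lcomp_lip (φ : Fin k → ℝ → ℝ) (L : ℝ) (hL : 0 ≤ L)
    (hφ : ∀ i x y, |φ i x - φ i y| ≤ L * |x - y|)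
    (l : List (Fin k)) (x y : ℝ) : |lcomp φ l x - lcomp φ l y| ≤ L ^ l.length * |x - y| := by
  induction l generalizing x y with
  | nil => simp [lcomp]
  | cons i l ih =>
    calc _ ≤ L ^ l.length * |φ i x - φ i y| := ih _ _
      _ ≤ L ^ l.length * (L * |x - y|) := by gcongr; exact hφ i x y
      _ = _ := by simp [pow_succ]; ring

lemma lcomp_mem (φ : Fin k → ℝ → ℝ) (R : ℝ) (HR : ∀ i x, |x| ≤ R → |φ i x| ≤ R)
    (l : List (Fin k)) (x : ℝ) (hx : |x| ≤ R) : |lcomp φ l x| ≤ R := by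
  induction l generalizing x with
  | nil => simpa [lcomp]
  | cons i l ih => exact ih _ (HR i x hx)

lemma pcIdx_congr (hk : 2 ≤ k) (b : Fin (k-1) → ℝ) (b' : Fin (k-1) → ℝ) (x y : ℝ)
    (h : ∀ i, b i ≤ x ↔ b' i ≤ y) : pcIdx hk b x = pcIdx hk b' y := by
  unfold pcIdx
  simp only [h]

lemma pcIdx_close (hk : 2 ≤ k) (b : Fin (k-1) → ℝ) (x y : ℝ)
    (h : ∀ i, |x - y| < |x - b i|) : pcIdx hk b x = pcIdx hk b y := by
  apply pcIdx_congr
  intro i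
  have := h i
  constructor
  · intro h1
    by_contra! h2
    rw [abs_of_nonneg (by linarith), abs_of_nonneg (by linarith)] at this
    linarith
  · intro h1
    by_contra! h2
    rw [abs_of_neg (a := x - b i) (by linarith), abs_of_neg (by linarith)] at this
    linarith

lemma iter_close (φ : Fin k → ℝ → ℝ) (L : ℝ) (hL : 0 ≤ L)
    (hφ : ∀ i x y, |φ i x - φ i y| ≤ L * |x - y|) (f : ℝ → ℝ) (c : ℝ → Fin k)
    (hf : ∀ x, f x = φ (c x) x) (x y : ℝ) (h : ∀ m, c (f^[m] x) = c (f^[m] y)) (m : ℕ) :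
    |f^[m] x - f^[m] y| ≤ L ^ m * |x - y| := by
  induction m with
  | zero => simp
  | succ m ih =>
    rw [Function.iterate_succ_apply', Function.iterate_succ_apply', hf, hf (f^[m] y), h m]
    calc _ ≤ L * |f^[m] x - f^[m] y| := hφ _ _ _
      _ ≤ L * (L ^ m * |x - y|) := by gcongr
      _ = _ := by ring

theorem AP_of_gap (hk : 2 ≤ k) (φ : Fin k → ℝ → ℝ) (L : ℝ) (hL0 : 0 < L) (hL1 : L < 1)
    (hφ : ∀ i x y, |φ i x - φ i y| ≤ L * |x - y|) (R : ℝ) (hR : 0 < R)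
    (HR : ∀ i x, |x| ≤ R → |φ i x| ≤ R) (b : Fin (k-1) → ℝ)
    (Habs : ∀ x, ∃ N, |(pc hk φ b)^[N] x| ≤ R)
    (n : ℕ) (hn : ∀ x, |x| ≤ R → ∀ i, 2 * R * L ^ n < |(pc hk φ b)^[n] x - b i|) :
    AsympPeriodic (pc hk φ b) := by
  set f := pc hk φ b with hfdef
  set c := pcIdx hk b with hc
  have hf : ∀ x, f x = φ (c x) x := fun x => rfl
  have hfm : ∀ m x, |x| ≤ R → |f^[m] x| ≤ R := by
    intro m x hx
    rw [← lcomp_wd φ f c hf]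
    exact lcomp_mem φ R HR _ _ hx
  have hdist : ∀ x y, |x| ≤ R → |y| ≤ R → |x - y| ≤ 2 * R := by
    intro x y hx hy
    have := abs_sub x y
    linarith
  have step : ∀ x y, |x| ≤ R → |y| ≤ R → wd f c n x = wd f c n y →
      c x = c y ∧ wd f c n (f x) = wd f c n (f y) := by
    intro x y hx hy h
    have h1 : |f^[n] x - f^[n] y| ≤ 2 * R * L ^ n := by
      rw [← lcomp_wd φ f c hf n x, ← lcomp_wd φ f c hf n y, ← h]
      refine (lcomp_lip φ L hL0.le hφ _ _ _).trans ?_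
      rw [wd_length, mul_comm]
      gcongr
      exact hdist x y hx hy
    have h2 : c (f^[n] x) = c (f^[n] y) :=
      pcIdx_close hk b _ _ fun i => h1.trans_lt (hn x hx i)
    have h3 : wd f c (n+1) x = wd f c (n+1) y := by
      rw [wd_add, wd_add, h]
      simp [wd, h2]
    simpa [wd] using h3
  have same : ∀ x y, |x| ≤ R → |y| ≤ R → wd f c n x = wd f c n y →
      ∀ m, c (f^[m] x) = c (f^[m] y) := by
    intro x y hx hy h m
    have : wd f c n (f^[m] x) = wd f c n (f^[m] y) := by
      induction m with
      | zero => simpa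
      | succ m ih =>
        rw [Function.iterate_succ_apply', Function.iterate_succ_apply']
        exact (step _ _ (hfm m x hx) (hfm m y hy) ih).2
    exact (step _ _ (hfm m x hx) (hfm m y hy) this).1
  refine ⟨?_, ?_⟩
  · apply Set.Finite.of_finite_image (f := wd f c n)
    · refine (List.finite_length_eq (Fin k) n).subset ?_
      rintro _ ⟨x, -, rfl⟩
      exact wd_length _ _ _ _
    · have hK : ∀ x p, 1 ≤ p → f^[p] x = x → |x| ≤ R := by
        intro x p hp hx
        obtain ⟨N, hN⟩ := Habs x
        have h1 : f^[N * p] x = x := by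
          have : Function.IsPeriodicPt f p x := hx
          exact this.const_mul N
        have h2 : N * p = (N * p - N) + N := by
          have : N * 1 ≤ N * p := Nat.mul_le_mul_left _ hp
          omega
        rw [h2, Function.iterate_add_apply] at h1
        rw [← h1]
        exact hfm _ _ hN
      rintro x ⟨p, hp, hx⟩ y ⟨q, hq, hy⟩ hxy
      have h1 := iter_close φ L hL0.le hφ f c hf x y
        (same x y (hK x p hp hx) (hK y q hq hy) hxy) (p * q)
      have hx' : f^[p * q] x = x := Function.IsPeriodicPt.mul_const (show Function.IsPeriodicPt f p x from hx) q
      have hy' : f^[p * q] y = y := Function.IsPeriodicPt.const_mul (show Function.IsPeriodicPt f q y from hy) p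
      rw [hx', hy'] at h1
      have h2 : L ^ (p * q) < 1 := pow_lt_one₀ hL0.le hL1 (by positivity)
      have h3 : |x - y| = 0 := by
        have := abs_nonneg (x - y)
        nlinarith
      linarith [abs_eq_zero.mp h3]
  · intro x
    obtain ⟨N, hN⟩ := Habs x
    obtain ⟨i, j, hij, hw⟩ : ∃ i j : ℕ, i < j ∧
        wd f c n (f^[i] (f^[N] x)) = wd f c n (f^[j] (f^[N] x)) := by
      have hfin := List.finite_length_eq (Fin k) n
      have := Set.infinite_univ (α := ℕ)
      obtain ⟨i, -, j, -, hne, he⟩ := this.exists_ne_map_eq_of_mapsTo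
        (f := fun i => wd f c n (f^[i] (f^[N] x))) (fun i _ => wd_length f c n _) hfin
      rcases lt_or_gt_of_ne hne with h | h
      · exact ⟨i, j, h, he⟩
      · exact ⟨j, i, h, he.symm⟩
    set y := f^[i] (f^[N] x) with hy
    have hyR : |y| ≤ R := hfm _ _ hN
    obtain ⟨p, rfl⟩ : ∃ p, j = p + i := ⟨j - i, by omega⟩
    have hp : 1 ≤ p := by omega
    rw [Function.iterate_add_apply, ← hy] at hw
    have hper := same y (f^[p] y) hyR (hfm _ _ hyR) hw
    have hclose := iter_close φ L hL0.le hφ f c hf _ _ hper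
    clear_value y
    have hper' : ∀ q r, c (f^[q * p + r] y) = c (f^[r] y) := by
      intro q r
      induction q with
      | zero => simp
      | succ q ih =>
        rw [← ih, hper (q * p + r), ← Function.iterate_add_apply]
        congr 2; ring_nf
    have hLp : L ^ p < 1 := pow_lt_one₀ hL0.le hL1 (by omega)
    have hcau : CauchySeq (fun q => f^[q * p] y) := by
      apply cauchySeq_of_le_geometric (L ^ p) (|y - f^[p] y|) hLp
      intro q
      have := hclose (q * p)
      rw [← Function.iterate_add_apply] at this
      rw [Real.dist_eq, ← pow_mul, mul_comm p q, add_mul, one_mul]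
      rw [mul_comm |y - f^[p] y|]
      exact this
    obtain ⟨z, hz⟩ := cauchySeq_tendsto_of_complete hcau
    have hgap : 0 < 2 * R * L ^ n := by positivity
    have hcz : ∀ r, Tendsto (fun q => f^[q * p + r] y) atTop (𝓝 (f^[r] z)) →
        ∀ᶠ q in atTop, c (f^[q * p + r] y) = c (f^[r] z) := by
      intro r hr
      have h1 : ∀ᶠ q in atTop, dist (f^[q * p + r] y) (f^[r] z) < 2 * R * L ^ n :=
        (Metric.tendsto_nhds.mp hr) _ hgap
      filter_upwards [h1, eventually_ge_atTop n] with q hq hqn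
      apply pcIdx_close
      intro i
      refine (lt_of_lt_of_le hq ?_)
      have h2 : q * p + r = n + (q * p + r - n) := by
        have : q * 1 ≤ q * p := Nat.mul_le_mul_left _ hp
        omega
      rw [h2, Function.iterate_add_apply]
      exact (hn _ (hfm _ _ hyR) i).le
    have hlim : ∀ r, Tendsto (fun q => f^[q * p + r] y) atTop (𝓝 (f^[r] z)) := by
      intro r
      induction r with
      | zero => simpa using hz
      | succ r ih =>
        have hcont : Continuous (φ (c (f^[r] z))) := by
          have : LipschitzWith (⟨L, hL0.le⟩ : ℝ≥0) (φ (c (f^[r] z))) :=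
            LipschitzWith.of_dist_le_mul fun x y => by
              exact hφ _ x y
          exact this.continuous
        have h1 := (hcont.tendsto (f^[r] z)).comp ih
        rw [Function.iterate_succ_apply', hf (f^[r] z)]
        refine h1.congr' ?_
        filter_upwards [hcz r ih] with q hq
        rw [← add_assoc, Function.iterate_succ_apply', hf (f^[q * p + r] y), hq]
        rfl
    have hyz : ∀ r, c (f^[r] y) = c (f^[r] z) := by
      intro r
      obtain ⟨q, hq⟩ := (hcz r (hlim r)).exists
      rw [← hq, hper']
    have hzp : f^[p] z = z := by
      refine tendsto_nhds_unique (hlim p) ?_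
      have := hz.comp (tendsto_add_atTop_nat 1)
      refine this.congr fun q => ?_
      simp [add_mul]
    have hdiff : Tendsto (fun m => f^[m] y - f^[m] z) atTop (𝓝 0) := by
      apply squeeze_zero_norm (a := fun m => L ^ m * |y - z|)
      · intro m
        exact iter_close φ L hL0.le hφ f c hf y z hyz m
      · simpa using (tendsto_pow_atTop_nhds_zero_of_lt_one hL0.le hL1).mul_const |y - z|
    have hper0 : Function.IsPeriodicPt f p z := hzp
    have hyx : ∀ m, f^[m] y = f^[m + (i + N)] x := by
      intro m
      rw [hy, ← Function.iterate_add_apply, ← Function.iterate_add_apply, add_assoc]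
    refine ⟨z, p, hp, hzp, ?_⟩
    ext w
    constructor
    · intro hw
      have hw : MapClusterPt w atTop fun n => f^[n] x := hw
      rw [mapClusterPt_iff_frequently] at hw
      have hcl : IsClosed (Set.range fun j : Fin p => f^[(j : ℕ)] z) :=
        (Set.finite_range _).isClosed
      rw [← hcl.closure_eq, Metric.mem_closure_iff]
      intro ε hε
      have h1 := hw _ (Metric.ball_mem_nhds w (half_pos hε))
      have h2 : ∀ᶠ m in atTop, dist (f^[m] y - f^[m] z) 0 < ε / 2 :=
        Metric.tendsto_nhds.mp hdiff _ (half_pos hε)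
      have h3 : ∀ᶠ m in atTop, dist (f^[m] x) (f^[m - (i+N)] z) < ε / 2 := by
        have := (tendsto_sub_atTop_nat (i+N)).eventually h2
        filter_upwards [this, eventually_ge_atTop (i+N)] with m hm hmN
        rw [hyx, Nat.sub_add_cancel hmN] at hm
        simpa [Real.dist_eq] using hm
      obtain ⟨m, hm1, hm2⟩ := (h1.and_eventually h3).exists
      refine ⟨f^[m - (i+N)] z, ⟨⟨(m - (i+N)) % p, Nat.mod_lt _ hp⟩, ?_⟩, ?_⟩
      · exact hper0.iterate_mod_apply _
      · have := Metric.mem_ball.mp hm1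
        have h4 := dist_triangle_left w (f^[m - (i+N)] z) (f^[m] x)
        linarith
    · rintro ⟨r, rfl⟩
      have ht : Tendsto (fun q => q * p + (r : ℕ) + (i + N)) atTop atTop := by
        rw [tendsto_atTop_atTop]
        intro B
        refine ⟨B, fun q hq => ?_⟩
        have : q * 1 ≤ q * p := Nat.mul_le_mul_left _ hp
        omega
      have h1 := (hlim r).mapClusterPt
      simp only [hyx] at h1
      exact MapClusterPt.of_comp ht h1

lemma phi_cont (φ : Fin k → ℝ → ℝ) (L : ℝ) (hL : 0 ≤ L)
    (hφ : ∀ i x y, |φ i x - φ i y| ≤ L * |x - y|) (i : Fin k) : Continuous (φ i) := by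
  have : LipschitzWith (⟨L, hL⟩ : ℝ≥0) (φ i) :=
    LipschitzWith.of_dist_le_mul fun x y => hφ _ x y
  exact this.continuous

lemma idx_loc (hk : 2 ≤ k) (a : Fin (k-1) → ℝ) (δ₀ x₀ : ℝ) (h : ∀ i, x₀ ≠ a i + δ₀) :
    ∀ᶠ q : ℝ × ℝ in 𝓝 (x₀, δ₀),
      pcIdx hk (fun i => a i + q.2) q.1 = pcIdx hk (fun i => a i + δ₀) x₀ := by
  have : ∀ i, ∀ᶠ q : ℝ × ℝ in 𝓝 (x₀, δ₀), (a i + q.2 ≤ q.1 ↔ a i + δ₀ ≤ x₀) := by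
    intro i
    have hc1 : ContinuousAt (fun q : ℝ × ℝ => a i + q.2) (x₀, δ₀) := by fun_prop
    have hc2 : ContinuousAt (fun q : ℝ × ℝ => q.1) (x₀, δ₀) := by fun_prop
    rcases lt_or_gt_of_ne (h i) with h1 | h1
    · filter_upwards [hc2.eventually_lt hc1 h1] with q hq
      exact ⟨fun h => absurd h (not_le.mpr hq), fun h => absurd h (not_le.mpr h1)⟩
    · filter_upwards [hc1.eventually_lt hc2 h1] with q hq
      exact ⟨fun _ => h1.le, fun _ => hq.le⟩
  filter_upwards [eventually_all.mpr this] with q hq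
  exact pcIdx_congr hk _ _ _ _ hq

/-- Itinerary of `x` for the parameter `δ`. -/
noncomputable def itw (hk : 2 ≤ k) (φ : Fin k → ℝ → ℝ) (a : Fin (k-1) → ℝ) (δ : ℝ) (m : ℕ)
    (x : ℝ) : List (Fin k) :=
  wd (pc hk φ (fun i => a i + δ)) (pcIdx hk (fun i => a i + δ)) m x

lemma itw_succ (hk : 2 ≤ k) (φ : Fin k → ℝ → ℝ) (a : Fin (k-1) → ℝ) (δ : ℝ) (m : ℕ)
    (x : ℝ) : itw hk φ a δ (m+1) x = pcIdx hk (fun i => a i + δ) x ::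
      itw hk φ a δ m (φ (pcIdx hk (fun i => a i + δ) x) x) := rfl

lemma tendsto_phi (φ : Fin k → ℝ → ℝ) (hc : ∀ i, Continuous (φ i)) (l : Fin k) (x₀ δ₀ : ℝ) :
    Tendsto (fun q : ℝ × ℝ => (φ l q.1, q.2)) (𝓝 (x₀, δ₀)) (𝓝 (φ l x₀, δ₀)) := by
  have := hc l
  have h : Continuous (fun q : ℝ × ℝ => (φ l q.1, q.2)) := by fun_prop
  exact h.tendsto (x₀, δ₀)

lemma itw_loc (hk : 2 ≤ k) (φ : Fin k → ℝ → ℝ) (hc : ∀ i, Continuous (φ i))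
    (a : Fin (k-1) → ℝ) (δ₀ : ℝ) (m : ℕ) (x₀ : ℝ)
    (h : ∀ l : List (Fin k), ∀ i, lcomp φ l x₀ ≠ a i + δ₀) :
    ∀ᶠ q : ℝ × ℝ in 𝓝 (x₀, δ₀), itw hk φ a q.2 m q.1 = itw hk φ a δ₀ m x₀ := by
  induction m generalizing x₀ with
  | zero => exact Eventually.of_forall fun _ => rfl
  | succ m ih =>
    have h1 := idx_loc hk a δ₀ x₀ (h [])
    have h2 := (tendsto_phi φ hc (pcIdx hk (fun i => a i + δ₀) x₀) x₀ δ₀).eventually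
      (ih (φ (pcIdx hk (fun i => a i + δ₀) x₀) x₀) fun l => h (_ :: l))
    filter_upwards [h1, h2] with q hq1 hq2
    rw [itw_succ, itw_succ, hq1]
    exact congrArg _ hq2

lemma itw_few (hk : 2 ≤ k) (φ : Fin k → ℝ → ℝ) (hc : ∀ i, Continuous (φ i))
    (a : Fin (k-1) → ℝ) (δ₀ : ℝ)
    (hs : ∀ l : List (Fin k), l ≠ [] → ∀ i j, lcomp φ l (a i + δ₀) ≠ a j + δ₀)
    (m : ℕ) (x₀ : ℝ) :
    ∃ F : Finset (List (Fin k)), F.card ≤ k ∧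
      ∀ᶠ q : ℝ × ℝ in 𝓝 (x₀, δ₀), itw hk φ a q.2 m q.1 ∈ F := by
  classical
  induction m generalizing x₀ with
  | zero => exact ⟨{[]}, by simp; omega, Eventually.of_forall fun _ => by simp [itw, wd]⟩
  | succ m ih =>
    by_cases hx : ∃ i, x₀ = a i + δ₀
    · obtain ⟨i, rfl⟩ := hx
      refine ⟨Finset.univ.image fun l => l :: itw hk φ a δ₀ m (φ l (a i + δ₀)), ?_, ?_⟩
      · exact Finset.card_image_le.trans (by simp)
      · have : ∀ l, ∀ᶠ q : ℝ × ℝ in 𝓝 (a i + δ₀, δ₀),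
            itw hk φ a q.2 m (φ l q.1) = itw hk φ a δ₀ m (φ l (a i + δ₀)) := fun l =>
          (tendsto_phi φ hc l (a i + δ₀) δ₀).eventually
            (itw_loc hk φ hc a δ₀ m (φ l (a i + δ₀)) fun w j => hs (l :: w) (by simp) i j)
        filter_upwards [eventually_all.mpr this] with q hq
        rw [itw_succ, hq]
        exact Finset.mem_image_of_mem _ (Finset.mem_univ _)
    · push Not at hx
      have h1 := idx_loc hk a δ₀ x₀ hx
      set l := pcIdx hk (fun i => a i + δ₀) x₀
      obtain ⟨F, hF, hF2⟩ := ih (φ l x₀)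
      refine ⟨F.image fun w => l :: w, Finset.card_image_le.trans hF, ?_⟩
      filter_upwards [h1, (tendsto_phi φ hc l x₀ δ₀).eventually hF2] with q hq1 hq2
      rw [itw_succ, hq1]
      exact Finset.mem_image_of_mem _ hq2

lemma itw_unif (hk : 2 ≤ k) (φ : Fin k → ℝ → ℝ) (hc : ∀ i, Continuous (φ i))
    (a : Fin (k-1) → ℝ) (δ₀ : ℝ)
    (hs : ∀ l : List (Fin k), l ≠ [] → ∀ i j, lcomp φ l (a i + δ₀) ≠ a j + δ₀)
    (m : ℕ) (R : ℝ) :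
    ∃ r > 0, ∀ x₀, |x₀| ≤ R → ∃ F : Finset (List (Fin k)), F.card ≤ k ∧
      ∀ x δ, |x - x₀| < r → |δ - δ₀| < r → itw hk φ a δ m x ∈ F := by
  choose F hF hF2 using itw_few hk φ hc a δ₀ hs m
  have hK : IsCompact (Icc (-R) R ×ˢ ({δ₀} : Set ℝ)) := isCompact_Icc.prod isCompact_singleton
  obtain ⟨r, hr, h⟩ := lebesgue_number_lemma_of_metric hK
    (c := fun x₀ : ℝ => interior {q : ℝ × ℝ | itw hk φ a q.2 m q.1 ∈ F x₀})
    (fun _ => isOpen_interior) (by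
      rintro ⟨x, δ⟩ ⟨hx, hδ⟩
      obtain rfl : δ = δ₀ := hδ
      exact Set.mem_iUnion.mpr ⟨x, mem_interior_iff_mem_nhds.mpr (hF2 x)⟩)
  refine ⟨r, hr, fun x₀ hx₀ => ?_⟩
  obtain ⟨y, hy⟩ := h (x₀, δ₀) ⟨abs_le.mp hx₀, rfl⟩
  refine ⟨F y, hF y, fun x δ hx hδ => ?_⟩
  have : (x, δ) ∈ Metric.ball (x₀, δ₀) r := by
    simp [Prod.dist_eq, Real.dist_eq, hx, hδ]
  have h2 : (x, δ) ∈ {q : ℝ × ℝ | itw hk φ a q.2 m q.1 ∈ F y} := interior_subset (hy this)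
  exact h2

lemma itw_count (hk : 2 ≤ k) (φ : Fin k → ℝ → ℝ) (L : ℝ) (hL0 : 0 < L) (hL1 : L < 1)
    (hφ : ∀ i x y, |φ i x - φ i y| ≤ L * |x - y|)
    (R : ℝ) (HR : ∀ i x, |x| ≤ R → |φ i x| ≤ R)
    (a : Fin (k-1) → ℝ) (δ₀ : ℝ)
    (hs : ∀ l : List (Fin k), l ≠ [] → ∀ i j, lcomp φ l (a i + δ₀) ≠ a j + δ₀)
    (m : ℕ) :
    ∃ r > 0, ∃ M : ℕ, ∀ n : ℕ, ∃ F : Finset (List (Fin k)), F.card ≤ M * k ^ n ∧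
      ∀ x δ, |x| ≤ R → |δ - δ₀| < r → itw hk φ a δ (n * m) x ∈ F := by
  classical
  obtain ⟨r, hr, h⟩ := itw_unif hk φ (phi_cont φ L hL0.le hφ) a δ₀ hs m R
  choose! F hF hF2 using h
  have key : ∀ n : ℕ, ∀ x₀, |x₀| ≤ R → ∃ G : Finset (List (Fin k)), G.card ≤ k ^ n ∧
      ∀ x δ, |x| ≤ R → |x - x₀| < r → |δ - δ₀| < r → itw hk φ a δ (n * m) x ∈ G := by
    intro n
    induction n with
    | zero => exact fun x₀ _ => ⟨{[]}, by simp, fun _ _ _ _ _ => by simp [itw, wd]⟩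
    | succ n ih =>
      intro x₀ hx₀
      choose! G hG hG2 using ih
      refine ⟨(F x₀).biUnion fun w => (G (lcomp φ w x₀)).image fun u => w ++ u, ?_, ?_⟩
      · rw [pow_succ, mul_comm]
        refine (Finset.card_biUnion_le_card_mul _ _ (k ^ n) fun w _ => ?_).trans
          (Nat.mul_le_mul_right _ (hF x₀ hx₀))
        exact Finset.card_image_le.trans (hG _ (lcomp_mem φ R HR w x₀ hx₀))
      · intro x δ hx hxx hδ
        have h1 := hF2 x₀ hx₀ x δ hxx hδ
        have h2 : itw hk φ a δ ((n + 1) * m) x = itw hk φ a δ m x ++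
            itw hk φ a δ (n * m) (lcomp φ (itw hk φ a δ m x) x) := by
          unfold itw
          rw [lcomp_wd φ (pc hk φ fun i => a i + δ) (pcIdx hk fun i => a i + δ)
            (fun _ => rfl), ← wd_add]
          congr 1; ring
        rw [h2]
        set w := itw hk φ a δ m x with hw
        refine Finset.mem_biUnion.mpr ⟨w, h1, Finset.mem_image_of_mem _ ?_⟩
        refine hG2 _ (lcomp_mem φ R HR w x₀ hx₀) _ δ (lcomp_mem φ R HR w x hx) ?_ hδ
        refine lt_of_le_of_lt (lcomp_lip φ L hL0.le hφ w x x₀) (lt_of_le_of_lt ?_ hxx)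
        exact mul_le_of_le_one_left (abs_nonneg _) (pow_le_one₀ hL0.le hL1.le)
  obtain ⟨t, ht, htf, hcov⟩ := (isCompact_Icc (a := -R) (b := R)).finite_cover_balls hr
  refine ⟨r, hr, htf.toFinset.card, fun n => ?_⟩
  choose! G hG hG2 using key n
  refine ⟨htf.toFinset.biUnion G, ?_, ?_⟩
  · exact Finset.card_biUnion_le_card_mul _ _ _ fun x hx =>
      hG x (abs_le.mpr (ht (htf.mem_toFinset.mp hx)))
  · intro x δ hx hδ
    obtain ⟨y, hy, hxy⟩ := Set.mem_iUnion₂.mp (hcov (abs_le.mp hx))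
    exact Finset.mem_biUnion.mpr ⟨y, htf.mem_toFinset.mpr hy,
      hG2 y (abs_le.mpr (ht hy)) x δ hx hxy hδ⟩

lemma dim_local (hk : 2 ≤ k) (φ : Fin k → ℝ → ℝ) (L : ℝ) (hL0 : 0 < L) (hL1 : L < 1)
    (hφ : ∀ i x y, |φ i x - φ i y| ≤ L * |x - y|)
    (R : ℝ) (hR : 0 < R) (HR : ∀ i x, |x| ≤ R → |φ i x| ≤ R)
    (a : Fin (k-1) → ℝ) (δ₀ : ℝ)
    (hs : ∀ l : List (Fin k), l ≠ [] → ∀ i j, lcomp φ l (a i + δ₀) ≠ a j + δ₀)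
    (B : Set ℝ) (hB : ∀ δ ∈ B, ∀ n : ℕ, ∃ x, |x| ≤ R ∧ ∃ i,
      |(pc hk φ (fun i => a i + δ))^[n] x - (a i + δ)| ≤ 2 * R * L ^ n)
    (d : ℝ≥0) (hd : 0 < d) :
    ∃ r > 0, dimH (B ∩ Metric.ball δ₀ r) ≤ d := by
  have hd' : (0 : ℝ) < d := hd
  have hLd : L ^ (d : ℝ) < 1 := Real.rpow_lt_one hL0.le hL1 hd'
  have hLd0 : 0 < L ^ (d : ℝ) := Real.rpow_pos_of_pos hL0 _
  obtain ⟨m, hm⟩ : ∃ m : ℕ, k * (L ^ (d : ℝ)) ^ m < 1 := by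
    have hk0 : (0 : ℝ) < k := by exact_mod_cast (by omega : 0 < k)
    obtain ⟨m, hm⟩ := exists_pow_lt_of_lt_one (one_div_pos.mpr hk0) hLd
    refine ⟨m, ?_⟩
    rw [lt_div_iff₀ hk0] at hm
    linarith
  obtain ⟨r, hr, M, h⟩ := itw_count hk φ L hL0 hL1 hφ R HR a δ₀ hs m
  choose F hF hF2 using h
  refine ⟨r, hr, ?_⟩
  apply dimH_le_of_hausdorffMeasure_ne_top
  -- `L ^ m < 1`
  have hm0 : m ≠ 0 := by
    rintro rfl
    have : (2 : ℝ) ≤ k := by exact_mod_cast hk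
    simp at hm
    linarith
  have hLm : L ^ m < 1 := pow_lt_one₀ hL0.le hL1 hm0
  have hr0 : Tendsto (fun n : ℕ => ENNReal.ofReal (6 * R * (L ^ m) ^ n)) atTop (𝓝 0) := by
    have := (tendsto_pow_atTop_nhds_zero_of_lt_one (by positivity) hLm).const_mul (6 * R)
    simpa using ENNReal.tendsto_ofReal this
  have hmain := MeasureTheory.Measure.hausdorffMeasure_le_liminf_sum (d : ℝ)
    (B ∩ Metric.ball δ₀ r) (fun n : ℕ => ENNReal.ofReal (6 * R * (L ^ m) ^ n)) hr0
    (ι := fun n => {w : F n // w.1.length = n * m} × Fin (k-1))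
    (fun n wi => Metric.closedBall (lcomp φ wi.1.1.1 0 - a wi.2) (3 * R * (L ^ m) ^ n))
    (Eventually.of_forall fun n wi => by
      rw [Real.closedBall_eq_Icc, Real.ediam_Icc]
      apply ENNReal.ofReal_le_ofReal
      linarith)
    (Eventually.of_forall fun n => by
      rintro δ ⟨hδB, hδr⟩
      obtain ⟨x, hx, i, hi⟩ := hB δ hδB (n * m)
      have hw := hF2 n x δ hx hδr
      have hl : (itw hk φ a δ (n * m) x).length = n * m := wd_length _ _ _ _
      refine Set.mem_iUnion.mpr ⟨(⟨⟨_, hw⟩, hl⟩, i), ?_⟩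
      have e : lcomp φ (itw hk φ a δ (n * m) x) x =
        (pc hk φ (fun i => a i + δ))^[n * m] x := lcomp_wd φ _ _ (fun _ => rfl) _ _
      have e2 := lcomp_lip φ L hL0.le hφ (itw hk φ a δ (n * m) x) x 0
      rw [hl, e, sub_zero] at e2
      have e3 : L ^ (n * m) * |x| ≤ L ^ (n * m) * R := by gcongr
      rw [Metric.mem_closedBall, Real.dist_eq, ← pow_mul, mul_comm m n]
      rw [abs_le] at *
      constructor <;> linarith [e2.1, e2.2, hi.1, hi.2])
  refine ne_top_of_le_ne_top ENNReal.zero_ne_top (hmain.trans (le_of_eq ?_))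
  apply Tendsto.liminf_eq
  have hlim : Tendsto (fun n : ℕ => ENNReal.ofReal
      ((M * k * (6 * R) ^ (d : ℝ)) * (k * (L ^ (d : ℝ)) ^ m) ^ n)) atTop (𝓝 0) := by
    have := (tendsto_pow_atTop_nhds_zero_of_lt_one (by positivity) hm).const_mul
      (M * k * (6 * R) ^ (d : ℝ))
    simpa using ENNReal.tendsto_ofReal this
  refine tendsto_of_tendsto_of_tendsto_of_le_of_le tendsto_const_nhds hlim
    (fun _ => zero_le) fun n => ?_
  have hcard : Fintype.card ({w : F n // w.1.length = n * m} × Fin (k-1)) ≤ M * k ^ n * k := by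
    rw [Fintype.card_prod, Fintype.card_fin]
    refine Nat.mul_le_mul ((Fintype.card_subtype_le _).trans ?_) (by omega)
    simpa using hF n
  calc _ ≤ ∑ _i : ({w : F n // w.1.length = n * m} × Fin (k-1)),
        ENNReal.ofReal ((6 * R * (L ^ m) ^ n) ^ (d : ℝ)) := by
        refine Finset.sum_le_sum fun wi _ => ?_
        rw [← ENNReal.ofReal_rpow_of_nonneg (by positivity) hd'.le]
        gcongr
        rw [Real.closedBall_eq_Icc, Real.ediam_Icc]
        apply ENNReal.ofReal_le_ofReal
        linarith
    _ = (Fintype.card ({w : F n // w.1.length = n * m} × Fin (k-1)) : ENNReal) *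
        ENNReal.ofReal ((6 * R * (L ^ m) ^ n) ^ (d : ℝ)) := by
        simp [Finset.sum_const, nsmul_eq_mul]
    _ ≤ ((M * k ^ n * k : ℕ) : ENNReal) * ENNReal.ofReal ((6 * R * (L ^ m) ^ n) ^ (d : ℝ)) := by
        gcongr
    _ = _ := by
        rw [← ENNReal.ofReal_natCast, ← ENNReal.ofReal_mul (by positivity)]
        congr 1
        have e1 : ((L ^ m) ^ n) ^ (d : ℝ) = ((L ^ (d : ℝ)) ^ m) ^ n := by
          rw [← pow_mul, ← pow_mul, ← Real.rpow_natCast, ← Real.rpow_natCast,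
            ← Real.rpow_mul hL0.le, ← Real.rpow_mul hL0.le, mul_comm]
        rw [Real.mul_rpow (by positivity) (by positivity), e1]
        push_cast
        rw [mul_pow]
        ring

lemma sing_countable (φ : Fin k → ℝ → ℝ) (L : ℝ) (hL0 : 0 < L) (hL1 : L < 1)
    (hφ : ∀ i x y, |φ i x - φ i y| ≤ L * |x - y|) (a : Fin (k-1) → ℝ) :
    {δ : ℝ | ∃ l : List (Fin k), l ≠ [] ∧ ∃ i j, lcomp φ l (a i + δ) = a j + δ}.Countable := by
  have : {δ : ℝ | ∃ l : List (Fin k), l ≠ [] ∧ ∃ i j, lcomp φ l (a i + δ) = a j + δ} ⊆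
      ⋃ l : {l : List (Fin k) // l ≠ []}, ⋃ i, ⋃ j,
        {δ : ℝ | lcomp φ l.1 (a i + δ) = a j + δ} := by
    rintro δ ⟨l, hl, i, j, h⟩
    simp only [Set.mem_iUnion]
    exact ⟨⟨l, hl⟩, i, j, h⟩
  refine Set.Countable.mono this ?_
  refine Set.countable_iUnion fun l => Set.countable_iUnion fun i => Set.countable_iUnion fun j =>
    Set.Subsingleton.countable ?_
  intro δ hδ δ' hδ'
  have h := lcomp_lip φ L hL0.le hφ l.1 (a i + δ) (a i + δ')
  rw [show lcomp φ l.1 (a i + δ) = _ from hδ, show lcomp φ l.1 (a i + δ') = _ from hδ',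
    add_sub_add_left_eq_sub, add_sub_add_left_eq_sub] at h
  have h2 : L ^ l.1.length < 1 := pow_lt_one₀ hL0.le hL1 (by simpa using l.2)
  have h3 : |δ - δ'| = 0 := by
    have := abs_nonneg (δ - δ')
    nlinarith
  linarith [abs_eq_zero.mp h3]

lemma exists_R (hk : 2 ≤ k) (φ : Fin k → ℝ → ℝ) (L : ℝ) (hL0 : 0 < L) (hL1 : L < 1)
    (hφ : ∀ i x y, |φ i x - φ i y| ≤ L * |x - y|) :
    ∃ R > 0, (∀ i x, |x| ≤ R → |φ i x| ≤ R) ∧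
      ∀ b x, ∃ N, |(pc hk φ b)^[N] x| ≤ R := by
  obtain ⟨c, hc0, hc⟩ : ∃ c : ℝ, 0 ≤ c ∧ ∀ i, |φ i 0| ≤ c :=
    ⟨∑ i, |φ i 0|, by positivity, fun i =>
      Finset.single_le_sum (f := fun i => |φ i 0|) (fun _ _ => abs_nonneg _) (Finset.mem_univ i)⟩
  have h1 : 0 < 1 - L := by linarith
  have hb : ∀ i x, |φ i x| ≤ L * |x| + c := by
    intro i x
    have h2 := hφ i x 0
    rw [sub_zero] at h2
    have h3 := abs_sub_abs_le_abs_sub (φ i x) (φ i 0)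
    linarith [hc i]
  have hq : c = (1 - L) * (c / (1 - L)) := by field_simp
  set Q := c / (1 - L) with hQ
  have hQ0 : 0 ≤ Q := by positivity
  refine ⟨Q + 1, by positivity, ?_, ?_⟩
  · intro i x hx
    have := hb i x
    nlinarith
  · intro b x
    have hN : ∀ N, |(pc hk φ b)^[N] x| ≤ L ^ N * |x| + Q := by
      intro N
      induction N with
      | zero => simpa using hQ0
      | succ N ih =>
        rw [Function.iterate_succ_apply']
        have := hb (pcIdx hk b ((pc hk φ b)^[N] x)) ((pc hk φ b)^[N] x)
        change |φ _ _| ≤ _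
        rw [pow_succ]
        nlinarith
    have ht : Tendsto (fun N => L ^ N * |x|) atTop (𝓝 0) := by
      simpa using (tendsto_pow_atTop_nhds_zero_of_lt_one hL0.le hL1).mul_const |x|
    obtain ⟨N, h⟩ := (ht.eventually (gt_mem_nhds one_pos)).exists
    exact ⟨N, by linarith [hN N]⟩

end Aux

/-- Theorem B -/
theorem stmt18 {k : ℕ} (hk : 2 ≤ k) (φ : Fin k → ℝ → ℝ) (lam : ℝ≥0) (hlam : lam < 1)
    (hlip : ∀ i, LipschitzWith lam (φ i)) (hinj : ∀ i, Function.Injective (φ i))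
    (a : Fin (k-1) → ℝ) (ha : StrictMono a) :
    dimH {δ : ℝ | ¬ AsympPeriodic (pc hk φ (fun i => a i + δ))} = 0 := by
  have hφ : ∀ i x y, |φ i x - φ i y| ≤ (lam : ℝ) * |x - y| := fun i x y => by
    simpa [Real.dist_eq] using (hlip i).dist_le_mul x y
  have hL1 : (lam : ℝ) < 1 := hlam
  have hL0 : (0 : ℝ) < lam := by
    have h1 := hφ ⟨0, by omega⟩ 1 0
    have h2 : φ ⟨0, by omega⟩ 1 ≠ φ ⟨0, by omega⟩ 0 := fun h => one_ne_zero (hinj _ h)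
    have h3 := abs_pos.mpr (sub_ne_zero.mpr h2)
    simp only [sub_zero, abs_one, mul_one] at h1
    linarith
  obtain ⟨R, hR, HR, Habs⟩ := exists_R hk φ lam hL0 hL1 hφ
  set B := {δ : ℝ | ¬ AsympPeriodic (pc hk φ (fun i => a i + δ))} with hBdef
  set S := {δ : ℝ | ∃ l : List (Fin k), l ≠ [] ∧ ∃ i j, lcomp φ l (a i + δ) = a j + δ} with hS
  have hSc : S.Countable := sing_countable φ lam hL0 hL1 hφ a
  have hB : ∀ δ ∈ B, ∀ n : ℕ, ∃ x, |x| ≤ R ∧ ∃ i,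
      |(pc hk φ (fun i => a i + δ))^[n] x - (a i + δ)| ≤ 2 * R * (lam : ℝ) ^ n := by
    intro δ hδ n
    by_contra! hcon
    exact hδ (AP_of_gap hk φ lam hL0 hL1 hφ R hR HR _ (Habs _) n hcon)
  have h0 : dimH (B \ S) = 0 := by
    by_contra hne
    obtain ⟨d, hd0, hd⟩ := ENNReal.lt_iff_exists_nnreal_btwn.mp (pos_iff_ne_zero.mpr hne)
    obtain ⟨δ₀, hδ₀, hloc⟩ := exists_mem_nhdsWithin_lt_dimH_of_lt_dimH hd
    have hs : ∀ l : List (Fin k), l ≠ [] → ∀ i j, lcomp φ l (a i + δ₀) ≠ a j + δ₀ :=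
      fun l hl i j h => hδ₀.2 ⟨l, hl, i, j, h⟩
    obtain ⟨r, hr, hdim⟩ := dim_local hk φ lam hL0 hL1 hφ R hR HR a δ₀ hs (B \ S)
      (fun δ hδ => hB δ hδ.1) d (by exact_mod_cast hd0)
    exact absurd hdim (not_le.mpr (hloc _ (inter_mem_nhdsWithin _ (Metric.ball_mem_nhds _ hr))))
  have h1 : dimH B ≤ max (dimH (B \ S)) (dimH S) := by
    rw [← dimH_union]
    exact dimH_mono (by rw [Set.sdiff_union_self]; exact Set.subset_union_left)
  rw [h0, hSc.dimH_zero, max_self] at h1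
  exact le_antisymm h1 zero_le
end

section
/- Let I = [0,1), 0 < |λ| < 1, and f: I → I a piecewise λ-affine map: there are 0 = a₀ < a₁ < ⋯ < a_k = 1 and b₁,…,b_k ∈ ℝ with f(x) = λx + b_i on [a_{i−1}, a_i). For δ ∈ ℝ, let f_δ = R_δ ∘ f with R_δ(x) = {x + δ} (fractional part). Then the exceptional set E_f = {δ ∈ ℝ : f_δ is not asymptotically periodic} has Hausdorff dimension zero. -/
open Filter Set Topology
open scoped NNReal

/-- The orbit of `w` under `x ↦ F x + δ`. -/
def orb (F : ℝ → ℝ) (δ w : ℝ) (n : ℕ) : ℝ := (fun x => F x + δ)^[n] w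

/-- The digit (translation part) at `w`. -/
def dgt (lam : ℝ) (F : ℝ → ℝ) (w : ℝ) : ℝ := F w - lam * w

/-- Geometric sums. -/
noncomputable def gs (lam : ℝ) (n : ℕ) : ℝ := ∑ i ∈ Finset.range n, lam ^ i

/-- Points reachable from `A` after `n` steps using arbitrary digits in `T`. -/
def reach (lam δ : ℝ) (T A : Set ℝ) : ℕ → Set ℝ
  | 0 => A
  | n+1 => Set.image2 (fun x t => lam * x + t + δ) (reach lam δ T A n) T

/-- Local data. -/
structure Loc (lam M : ℝ) (F : ℝ → ℝ) (T A : Set ℝ) : Prop where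
  l0 : 0 < |lam|
  l1 : |lam| < 1
  Tfin : T.Finite
  Afin : A.Finite
  hT : ∀ w, |w| ≤ M → dgt lam F w ∈ T
  hsep : ∀ u v, |u| ≤ M → |v| ≤ M → u ≤ v → dgt lam F u ≠ dgt lam F v →
    ∃ s ∈ A, u < s ∧ s ≤ v
  hF0 : ∀ w, 0 ≤ F w
  hF1 : ∀ w, F w < 1

lemma orb_zero (F : ℝ → ℝ) (δ w : ℝ) : orb F δ w 0 = w := rfl

lemma orb_succ (F : ℝ → ℝ) (δ w : ℝ) (n : ℕ) : orb F δ w (n+1) = F (orb F δ w n) + δ := by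
  unfold orb
  rw [Function.iterate_succ_apply']

lemma orb_add (F : ℝ → ℝ) (δ w : ℝ) (i j : ℕ) :
    orb F δ (orb F δ w i) j = orb F δ w (i + j) := by
  unfold orb
  rw [add_comm, Function.iterate_add_apply]

lemma orb_mem {lam M : ℝ} {F : ℝ → ℝ} {T A : Set ℝ} (L : Loc lam M F T A) {δ w : ℝ}
    (hδ : |δ| + 1 ≤ M) (hw : |w| ≤ M) (n : ℕ) : |orb F δ w n| ≤ M := by
  cases n with
  | zero => exact hw
  | succ n =>
    rw [orb_succ]
    have h0 := L.hF0 (orb F δ w n)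
    have h1 := L.hF1 (orb F δ w n)
    have := abs_le.1 (le_refl |δ|)
    rw [abs_le]; constructor <;> linarith

lemma gs_succ (lam : ℝ) (n : ℕ) : gs lam (n+1) = lam * gs lam n + 1 := by
  unfold gs; exact geom_sum_succ

lemma gs_zero (lam : ℝ) : gs lam 0 = 0 := by simp [gs]

lemma gs_mul (lam : ℝ) (n : ℕ) : gs lam n * (1 - lam) = 1 - lam ^ n := by
  induction n with
  | zero => simp [gs]
  | succ n ih => rw [gs_succ, pow_succ]; linear_combination lam * ih

lemma gs_le {lam : ℝ} (h : |lam| < 1) (n : ℕ) :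
    |gs lam n| * (1 - |lam|) ≤ 1 - |lam| ^ n := by
  rw [← gs_mul]
  have h1 : |gs lam n| ≤ gs |lam| n := by
    unfold gs
    refine (Finset.abs_sum_le_sum_abs _ _).trans (le_of_eq ?_)
    simp [abs_pow]
  have h2 : 0 ≤ 1 - |lam| := by linarith
  exact mul_le_mul_of_nonneg_right h1 h2

lemma gs_ge {lam : ℝ} (h : |lam| < 1) (n : ℕ) (hn : 1 ≤ n) :
    (1 - |lam|) / 2 ≤ |gs lam n| := by
  have h1 := gs_mul lam n
  have h2 : |gs lam n| * |1 - lam| = |1 - lam ^ n| := by rw [← abs_mul, h1]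
  have h3 : |1 - lam| ≤ 2 := by
    have := abs_lt.1 h
    rw [abs_le]; constructor <;> linarith
  have h4 : |lam ^ n| ≤ |lam| := by
    rw [abs_pow]
    exact pow_le_of_le_one (abs_nonneg _) h.le (by omega)
  have h5 : 1 - |lam| ≤ |1 - lam ^ n| := by
    have := le_abs_self (lam ^ n)
    have := le_abs_self (1 - lam ^ n)
    linarith
  nlinarith [abs_nonneg (gs lam n)]

lemma orb_diff (lam : ℝ) (F : ℝ → ℝ) (δ δ' w w' : ℝ) (n : ℕ)
    (h : ∀ j < n, dgt lam F (orb F δ w j) = dgt lam F (orb F δ' w' j)) :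
    orb F δ w n - orb F δ' w' n = lam ^ n * (w - w') + gs lam n * (δ - δ') := by
  induction n with
  | zero => simp [gs_zero, orb_zero]
  | succ n ih =>
    have h1 := ih (fun j hj => h j (by omega))
    have h2 := h n (by omega)
    unfold dgt at h2
    rw [orb_succ, orb_succ, gs_succ, pow_succ]
    linear_combination h2 + lam * h1

lemma orb_reach {lam M : ℝ} {F : ℝ → ℝ} {T A : Set ℝ} (L : Loc lam M F T A) {δ δ₀ w s : ℝ}
    (hδ : |δ| + 1 ≤ M) (hw : |w| ≤ M) (hs : s ∈ A) (n : ℕ) :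
    ∃ v ∈ reach lam δ₀ T A n, orb F δ w n - v = lam ^ n * (w - s) + gs lam n * (δ - δ₀) := by
  induction n with
  | zero => exact ⟨s, hs, by simp [gs_zero, orb_zero]⟩
  | succ n ih =>
    obtain ⟨v, hv, e⟩ := ih
    refine ⟨_, Set.mem_image2_of_mem hv (L.hT _ (orb_mem L hδ hw n)), ?_⟩
    rw [orb_succ, gs_succ, pow_succ]
    unfold dgt
    linear_combination lam * e

/-- Two points with the same digits stay `ρ`-close. -/
lemma close_stay {lam ρ ε δ₀ : ℝ} (F : ℝ → ℝ) {δ δ' w w' : ℝ} (n : ℕ) (hl : |lam| < 1)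
    (hε : 4 * ε ≤ (1 - |lam|) * ρ)
    (hδ : |δ - δ₀| ≤ ε) (hδ' : |δ' - δ₀| ≤ ε) (B : ℝ) (hw : |w - w'| ≤ B)
    (h : ∀ j < n, dgt lam F (orb F δ w j) = dgt lam F (orb F δ' w' j)) :
    |orb F δ w n - orb F δ' w' n| ≤ |lam| ^ n * B + (1 - |lam| ^ n) * (ρ / 2) := by
  rw [orb_diff lam F δ δ' w w' n h]
  have h1 : |δ - δ'| ≤ (1 - |lam|) * (ρ / 2) := by
    have := abs_le.1 hδ
    have := abs_le.1 hδ'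
    rw [abs_le]; constructor <;> linarith
  have hρ : 0 ≤ ρ := by
    have := abs_nonneg (δ - δ₀)
    by_contra hc
    push Not at hc
    nlinarith
  refine (abs_add_le _ _).trans ?_
  rw [abs_mul, abs_mul, abs_pow]
  have h2 := gs_le hl n
  have h3 : |gs lam n| * |δ - δ'| ≤ |gs lam n| * ((1 - |lam|) * (ρ / 2)) := by gcongr
  have h4 : |gs lam n| * (1 - |lam|) * (ρ/2) ≤ (1 - |lam|^n) * (ρ / 2) := by gcongr
  have h5 : |lam|^n * |w - w'| ≤ |lam|^n * B := by gcongr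
  linarith

lemma sep_abs {lam M : ℝ} {F : ℝ → ℝ} {T A : Set ℝ} (L : Loc lam M F T A) {u v : ℝ}
    (hu : |u| ≤ M) (hv : |v| ≤ M) (h : dgt lam F u ≠ dgt lam F v) :
    ∃ s ∈ A, (u < s ∧ s ≤ v) ∨ (v < s ∧ s ≤ u) := by
  rcases le_total u v with huv | huv
  · obtain ⟨s, hs, h1⟩ := L.hsep u v hu hv huv h
    exact ⟨s, hs, Or.inl h1⟩
  · obtain ⟨s, hs, h1⟩ := L.hsep v u hv hu huv h.symm
    exact ⟨s, hs, Or.inr h1⟩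

/-- local quantitative data around `δ₀`. -/
structure Quant (lam M : ℝ) (T A : Set ℝ) (N : ℕ) (δ₀ ρ ε : ℝ) : Prop where
  ρ0 : 0 < ρ
  ε0 : 0 < ε
  hM : |δ₀| + ε + 1 ≤ M
  hε : 4 * ε ≤ (1 - |lam|) * ρ
  hgap : ∀ s ∈ A, ∀ s' ∈ A, s ≠ s' → 3 * ρ < |s - s'|
  hconn : ∀ j, 1 ≤ j → j ≤ N → ∀ v ∈ reach lam δ₀ T A j, ∀ s ∈ A, 3 * ρ < |v - s|

lemma Quant.hδ {lam M : ℝ} {T A : Set ℝ} {N : ℕ} {δ₀ ρ ε : ℝ} (Q : Quant lam M T A N δ₀ ρ ε)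
    {δ : ℝ} (h : |δ - δ₀| ≤ ε) : |δ| + 1 ≤ M := by
  have := Q.hM
  have := abs_sub_abs_le_abs_sub δ δ₀
  linarith

lemma near_sing {lam M : ℝ} {F : ℝ → ℝ} {T A : Set ℝ} (L : Loc lam M F T A) {N : ℕ}
    {δ₀ ρ ε : ℝ} (Q : Quant lam M T A N δ₀ ρ ε) {δ δ' w w' s : ℝ}
    (hδ : |δ - δ₀| ≤ ε) (hδ' : |δ' - δ₀| ≤ ε) (hw : |w| ≤ M) (hw' : |w'| ≤ M)
    (hs : s ∈ A) (hws : |w - s| ≤ ρ) (hww : |w - w'| ≤ ρ) (h0 : dgt lam F w = dgt lam F w')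
    (j : ℕ) (hj : j ≤ N) : dgt lam F (orb F δ w j) = dgt lam F (orb F δ' w' j) := by
  induction j using Nat.strong_induction_on with
  | _ j ih =>
    rcases Nat.eq_zero_or_pos j with rfl | hpos
    · exact h0
    by_contra hne
    have hρ := Q.ρ0
    have hl0 := L.l0
    have hl1 := L.l1
    have hp0 : 0 ≤ |lam| ^ j := by positivity
    have hp1 : |lam| ^ j ≤ 1 := pow_le_one₀ hl0.le hl1.le
    have hc := close_stay F j L.l1 Q.hε hδ hδ' ρ hww (fun i hi => ih i hi (by omega))
    have hc' : |orb F δ w j - orb F δ' w' j| ≤ ρ := by nlinarith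
    obtain ⟨v, hv, e⟩ := orb_reach L (δ₀ := δ₀) (Q.hδ hδ) hw hs j
    have hwv : |orb F δ w j - v| ≤ 5 / 4 * ρ := by
      rw [e]
      refine (abs_add_le _ _).trans ?_
      rw [abs_mul, abs_mul, abs_pow]
      have h2 := gs_le L.l1 j
      have h3 : |gs lam j| * |δ - δ₀| ≤ |gs lam j| * ((1 - |lam|) * (ρ / 4)) := by
        gcongr; linarith [Q.hε]
      have h4 : |gs lam j| * (1 - |lam|) * (ρ/4) ≤ 1 * (ρ / 4) := by
        gcongr; linarith
      have h5 : |lam|^j * |w - s| ≤ 1 * ρ := by gcongr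
      linarith
    obtain ⟨s', hs', hb⟩ := sep_abs L (orb_mem L (Q.hδ hδ) hw j) (orb_mem L (Q.hδ hδ') hw' j) hne
    have hcon := Q.hconn j hpos hj v hv s' hs'
    have h1 := abs_le.1 hc'
    have h2 := abs_le.1 hwv
    have h3 : |v - s'| ≤ 3 * ρ := by
      rw [abs_le]
      rcases hb with hb | hb <;> constructor <;> linarith
    linarith

lemma same_side {lam M : ℝ} {F : ℝ → ℝ} {T A : Set ℝ} (L : Loc lam M F T A) {N : ℕ}
    {δ₀ ρ ε : ℝ} (Q : Quant lam M T A N δ₀ ρ ε) {u v s : ℝ} (hu : |u| ≤ M) (hv : |v| ≤ M)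
    (hs : s ∈ A) (hus : |u - s| ≤ ρ) (hvs : |v - s| ≤ ρ) (h : u < s ↔ v < s) :
    dgt lam F u = dgt lam F v := by
  by_contra hne
  have hρ := Q.ρ0
  obtain ⟨s', hs', hb⟩ := sep_abs L hu hv hne
  have h1 := abs_le.1 hus
  have h2 := abs_le.1 hvs
  have hss : s ≠ s' := by
    rintro rfl
    rcases hb with hb | hb
    · have := h.1 hb.1; linarith [hb.2]
    · have := h.2 hb.1; linarith [hb.2]
  have := Q.hgap s hs s' hs' hss
  have h3 : |s - s'| ≤ 3 * ρ := by
    rw [abs_le]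
    rcases hb with hb | hb <;> constructor <;> linarith
  linarith

/-- Agreement of digits before time `n`. -/
def Same (lam : ℝ) (F : ℝ → ℝ) (n : ℕ) (p q : ℝ × ℝ) : Prop :=
  ∀ j < n, dgt lam F (orb F p.1 p.2 j) = dgt lam F (orb F q.1 q.2 j)

lemma two_of_three {lam M : ℝ} {F : ℝ → ℝ} {T A : Set ℝ} (L : Loc lam M F T A) {N : ℕ}
    {δ₀ ρ ε : ℝ} (Q : Quant lam M T A N δ₀ ρ ε) (p q r : ℝ × ℝ)
    (hp : |p.1 - δ₀| ≤ ε ∧ |p.2| ≤ M) (hq : |q.1 - δ₀| ≤ ε ∧ |q.2| ≤ M)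
    (hr : |r.1 - δ₀| ≤ ε ∧ |r.2| ≤ M)
    (hpq : |p.2 - q.2| ≤ ρ) (hpr : |p.2 - r.2| ≤ ρ) (hqr : |q.2 - r.2| ≤ ρ) :
    Same lam F N p q ∨ Same lam F N p r ∨ Same lam F N q r := by
  classical
  by_cases hall : ∃ j, j < N ∧ ¬ (dgt lam F (orb F p.1 p.2 j) = dgt lam F (orb F q.1 q.2 j) ∧
      dgt lam F (orb F p.1 p.2 j) = dgt lam F (orb F r.1 r.2 j))
  swap
  · left
    intro j hj
    by_contra hc
    exact hall ⟨j, hj, fun h => hc h.1⟩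
  · obtain ⟨hjN, hj⟩ := Nat.find_spec hall
    have hmin := fun i hi => Nat.find_min hall (m := i) hi
    generalize Nat.find hall = j at hjN hj hmin
    have hmin' : ∀ i < j, dgt lam F (orb F p.1 p.2 i) = dgt lam F (orb F q.1 q.2 i) ∧
      dgt lam F (orb F p.1 p.2 i) = dgt lam F (orb F r.1 r.2 i) := by
      intro i hi
      by_contra hc
      exact hmin i hi ⟨by omega, hc⟩
    have hρ := Q.ρ0
    have hl0 := L.l0
    have hl1 := L.l1
    have hp0 : 0 ≤ |lam| ^ j := by positivity
    have hp1 : |lam| ^ j ≤ 1 := pow_le_one₀ hl0.le hl1.le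
    have key : ∀ x y : ℝ × ℝ, |x.1 - δ₀| ≤ ε → |y.1 - δ₀| ≤ ε → |x.2 - y.2| ≤ ρ →
        Same lam F j x y → |orb F x.1 x.2 j - orb F y.1 y.2 j| ≤ ρ := by
      intro x y hx hy hxy hS
      have := close_stay F j L.l1 Q.hε hx hy ρ hxy hS
      nlinarith
    have spq : Same lam F j p q := fun i hi => (hmin' i hi).1
    have spr : Same lam F j p r := fun i hi => (hmin' i hi).2
    have sqr : Same lam F j q r := fun i hi => (hmin' i hi).1.symm.trans (hmin' i hi).2
    have cpq := key p q hp.1 hq.1 hpq spq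
    have cpr := key p r hp.1 hr.1 hpr spr
    have cqr := key q r hq.1 hr.1 hqr sqr
    have mp := orb_mem L (Q.hδ hp.1) hp.2 j
    have mq := orb_mem L (Q.hδ hq.1) hq.2 j
    have mr := orb_mem L (Q.hδ hr.1) hr.2 j
    have fin : ∀ x y : ℝ × ℝ, |x.1 - δ₀| ≤ ε → |y.1 - δ₀| ≤ ε →
        |orb F x.1 x.2 j| ≤ M → |orb F y.1 y.2 j| ≤ M →
        Same lam F j x y → ∀ s ∈ A, |orb F x.1 x.2 j - s| ≤ ρ → |orb F y.1 y.2 j - s| ≤ ρ →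
        |orb F x.1 x.2 j - orb F y.1 y.2 j| ≤ ρ →
        (orb F x.1 x.2 j < s ↔ orb F y.1 y.2 j < s) → Same lam F N x y := by
      intro x y hx hy mx my hS s hs hxs hys hxy hiff i hi
      rcases lt_or_ge i j with hij | hij
      · exact hS i hij
      · have := near_sing L Q hx hy mx my hs hxs hxy (same_side L Q mx my hs hxs hys hiff)
          (i - j) (by omega)
        rw [orb_add, orb_add] at this
        rwa [show j + (i - j) = i by omega] at this
    have hs : ∃ s ∈ A, |orb F p.1 p.2 j - s| ≤ ρ ∧ |orb F q.1 q.2 j - s| ≤ ρ ∧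
        |orb F r.1 r.2 j - s| ≤ ρ := by
      have h1 := abs_le.1 cpq
      have h2 := abs_le.1 cpr
      have h3 := abs_le.1 cqr
      rw [not_and_or] at hj
      rcases hj with hj | hj
      · obtain ⟨s, hs, hb⟩ := sep_abs L mp mq hj
        refine ⟨s, hs, ?_⟩
        simp only [abs_le]
        rcases hb with hb | hb <;> refine ⟨⟨?_, ?_⟩, ⟨?_, ?_⟩, ?_, ?_⟩ <;> linarith
      · obtain ⟨s, hs, hb⟩ := sep_abs L mp mr hj
        refine ⟨s, hs, ?_⟩
        simp only [abs_le]
        rcases hb with hb | hb <;> refine ⟨⟨?_, ?_⟩, ⟨?_, ?_⟩, ?_, ?_⟩ <;> linarith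
    obtain ⟨s, hsA, sp, sq, sr⟩ := hs
    have f1 := fin p q hp.1 hq.1 mp mq spq s hsA sp sq cpq
    have f2 := fin p r hp.1 hr.1 mp mr spr s hsA sp sr cpr
    have f3 := fin q r hq.1 hr.1 mq mr sqr s hsA sq sr cqr
    tauto

/-- There are at most `m` words of length `n`. -/
def Reps (lam M : ℝ) (F : ℝ → ℝ) (δ₀ ε : ℝ) (n m : ℕ) : Prop :=
  ∃ R : Finset (ℝ × ℝ), R.card ≤ m ∧ (∀ p ∈ R, |p.1 - δ₀| ≤ ε ∧ |p.2| ≤ M) ∧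
    ∀ p : ℝ × ℝ, |p.1 - δ₀| ≤ ε → |p.2| ≤ M → ∃ r ∈ R, Same lam F n p r

lemma Same.symm {lam : ℝ} {F : ℝ → ℝ} {n : ℕ} {p q : ℝ × ℝ} (h : Same lam F n p q) :
    Same lam F n q p := fun j hj => (h j hj).symm

lemma Same.trans {lam : ℝ} {F : ℝ → ℝ} {n : ℕ} {p q r : ℝ × ℝ} (h : Same lam F n p q)
    (h' : Same lam F n q r) : Same lam F n p r := fun j hj => (h j hj).trans (h' j hj)

lemma Same.add {lam : ℝ} {F : ℝ → ℝ} {n m : ℕ} {p q : ℝ × ℝ} (h : Same lam F n p q)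
    (h' : Same lam F m (p.1, orb F p.1 p.2 n) (q.1, orb F q.1 q.2 n)) :
    Same lam F (n + m) p q := by
  intro j hj
  rcases lt_or_ge j n with hjn | hjn
  · exact h j hjn
  · have := h' (j - n) (by omega)
    simp only [orb_add] at this
    rwa [show n + (j - n) = j by omega] at this

lemma reps_base {lam M : ℝ} {F : ℝ → ℝ} {T A : Set ℝ} (L : Loc lam M F T A) {N : ℕ}
    {δ₀ ρ ε : ℝ} (Q : Quant lam M T A N δ₀ ρ ε) (n : ℕ) : ∃ m, Reps lam M F δ₀ ε n m := by
  classical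
  let P : Set (ℝ × ℝ) := {p | |p.1 - δ₀| ≤ ε ∧ |p.2| ≤ M}
  let φ : ℝ × ℝ → (Fin n → ℝ) := fun p j => dgt lam F (orb F p.1 p.2 j)
  have hfin : (φ '' P).Finite := by
    refine (Set.Finite.pi (fun _ : Fin n => L.Tfin)).subset ?_
    rintro _ ⟨p, hp, rfl⟩ j _
    exact L.hT _ (orb_mem L (Q.hδ hp.1) hp.2 j)
  have hex : ∀ y ∈ φ '' P, ∃ p, p ∈ P ∧ φ p = y := fun y hy => hy
  choose! g hg using hex
  refine ⟨_, hfin.toFinset.image g, le_rfl, ?_, ?_⟩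
  · intro p hp
    rw [Finset.mem_image] at hp
    obtain ⟨y, hy, rfl⟩ := hp
    exact (hg y (hfin.mem_toFinset.1 hy)).1
  · intro p hp1 hp2
    have hm : φ p ∈ φ '' P := ⟨p, ⟨hp1, hp2⟩, rfl⟩
    refine ⟨g (φ p), Finset.mem_image_of_mem _ (hfin.mem_toFinset.2 hm), ?_⟩
    intro j hj
    exact (congrFun (hg _ hm).2 ⟨j, hj⟩).symm

lemma reps_step {lam M : ℝ} {F : ℝ → ℝ} {T A : Set ℝ} (L : Loc lam M F T A) {N : ℕ}
    {δ₀ ρ ε : ℝ} (Q : Quant lam M T A N δ₀ ρ ε) (n m : ℕ) (hn : |lam| ^ n * (2 * M) ≤ ρ / 2)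
    (h : Reps lam M F δ₀ ε n m) : Reps lam M F δ₀ ε (n + N) (m * 2) := by
  classical
  obtain ⟨R, hc, hR, hcov⟩ := h
  have hex : ∀ r : ℝ × ℝ, ∃ r' : ℝ × ℝ, (|r.1 - δ₀| ≤ ε ∧ |r.2| ≤ M) →
      ((|r'.1 - δ₀| ≤ ε ∧ |r'.2| ≤ M) ∧ ∀ p : ℝ × ℝ, |p.1 - δ₀| ≤ ε → |p.2| ≤ M →
        Same lam F n p r → Same lam F (n + N) p r ∨ Same lam F (n + N) p r') := by
    intro r
    by_cases hr : ∃ p : ℝ × ℝ, |p.1 - δ₀| ≤ ε ∧ |p.2| ≤ M ∧ Same lam F n p r ∧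
        ¬ Same lam F (n + N) p r
    · obtain ⟨r', h1, h2, h3, h4⟩ := hr
      refine ⟨r', fun hr => ⟨⟨h1, h2⟩, fun p hp1 hp2 hpr => ?_⟩⟩
      have key : ∀ x y : ℝ × ℝ, |x.1 - δ₀| ≤ ε → |y.1 - δ₀| ≤ ε → |x.2| ≤ M → |y.2| ≤ M →
          Same lam F n x y → |orb F x.1 x.2 n - orb F y.1 y.2 n| ≤ ρ := by
        intro x y hx hy hx2 hy2 hS
        have hxy : |x.2 - y.2| ≤ 2 * M := by
          have := abs_le.1 hx2
          have := abs_le.1 hy2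
          rw [abs_le]; constructor <;> linarith
        have h1 := close_stay F n L.l1 Q.hε hx hy _ hxy hS
        have hρ := Q.ρ0
        have hp0 : 0 ≤ |lam| ^ n := by positivity
        nlinarith
      have := two_of_three L Q (p.1, orb F p.1 p.2 n) (r.1, orb F r.1 r.2 n)
        (r'.1, orb F r'.1 r'.2 n)
        ⟨hp1, orb_mem L (Q.hδ hp1) hp2 n⟩ ⟨hr.1, orb_mem L (Q.hδ hr.1) hr.2 n⟩
        ⟨h1, orb_mem L (Q.hδ h1) h2 n⟩
        (key p r hp1 hr.1 hp2 hr.2 hpr) (key p r' hp1 h1 hp2 h2 (hpr.trans h3.symm))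
        (key r r' hr.1 h1 hr.2 h2 h3.symm)
      rcases this with h | h | h
      · exact Or.inl (hpr.add h)
      · exact Or.inr ((hpr.trans h3.symm).add h)
      · exact absurd (h3.symm.add h).symm h4
    · refine ⟨r, fun hr' => ⟨hr', fun p hp1 hp2 hpr => ?_⟩⟩
      left
      by_contra hcon
      exact hr ⟨p, hp1, hp2, hpr, hcon⟩
  choose φ hφ using hex
  refine ⟨R.biUnion (fun r => {r, φ r}), ?_, ?_, ?_⟩
  · refine (Finset.card_biUnion_le_card_mul R _ 2 (fun r _ => Finset.card_le_two)).trans ?_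
    gcongr
  · intro p hp
    simp only [Finset.mem_biUnion, Finset.mem_insert, Finset.mem_singleton] at hp
    obtain ⟨r, hr, rfl | rfl⟩ := hp
    · exact hR _ hr
    · exact (hφ r (hR r hr)).1
  · intro p hp1 hp2
    obtain ⟨r, hr, hS⟩ := hcov p hp1 hp2
    rcases (hφ r (hR r hr)).2 p hp1 hp2 hS with h | h
    · exact ⟨r, by simp only [Finset.mem_biUnion]; exact ⟨r, hr, by simp⟩, h⟩
    · exact ⟨φ r, by simp only [Finset.mem_biUnion]; exact ⟨r, hr, by simp⟩, h⟩

/-- `δ` is hitting: images come exponentially close to `A`. -/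
def Hit (lam M : ℝ) (F : ℝ → ℝ) (A : Set ℝ) (δ : ℝ) : Prop :=
  ∀ n : ℕ, ∃ w, |w| ≤ M ∧ ∃ s ∈ A, |orb F δ w n - s| ≤ |lam| ^ n * (2 * M)

open MeasureTheory in
lemma dim_local_s19 {lam M : ℝ} {F : ℝ → ℝ} {T A : Set ℝ} (L : Loc lam M F T A) {N : ℕ}
    {δ₀ ρ ε : ℝ} (Q : Quant lam M T A N δ₀ ρ ε) (d : ℝ≥0) (hd : 0 < d)
    (hN1 : 1 ≤ N) (hN : (|lam| ^ (d : ℝ)) ^ N ≤ 1 / 2) :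
    dimH {δ : ℝ | |δ - δ₀| ≤ ε ∧ Hit lam M F A δ} ≤ d := by
  classical
  have hl0 := L.l0
  have hl1 := L.l1
  have hM : 0 < M := by
    have := Q.hM
    have := Q.ε0
    have := abs_nonneg δ₀
    linarith
  obtain ⟨n₀, hn₀⟩ : ∃ n₀ : ℕ, |lam| ^ n₀ * (2 * M) ≤ ρ / 2 := by
    have : Tendsto (fun n : ℕ => |lam| ^ n * (2 * M)) atTop (𝓝 (0 * (2 * M))) :=
      (tendsto_pow_atTop_nhds_zero_of_lt_one hl0.le hl1).mul_const _
    rw [zero_mul] at this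
    have hρ := Q.ρ0
    exact ((this.eventually (gt_mem_nhds (show 0 < ρ / 2 by linarith))).exists).imp
      fun _ h => h.le
  obtain ⟨m₀, hm₀⟩ := reps_base L Q n₀
  have hreps : ∀ q : ℕ, Reps lam M F δ₀ ε (n₀ + q * N) (m₀ * 2 ^ q) := by
    intro q
    induction q with
    | zero => simpa using hm₀
    | succ q ih =>
      have := reps_step L Q _ _ (by
        refine le_trans ?_ hn₀
        have : |lam| ^ (n₀ + q * N) ≤ |lam| ^ n₀ :=
          pow_le_pow_of_le_one hl0.le hl1.le (by omega)
        gcongr) ih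
      convert this using 1
      · ring
      · ring
  choose R hRc hRm hRcov using hreps
  set K : ℝ := 12 * M / (1 - |lam|) with hK
  have hK0 : 0 ≤ K := by
    have : 0 < 1 - |lam| := by linarith
    positivity
  let ι : ℕ → Type := fun q => ↥((R q) ×ˢ L.Afin.toFinset)
  let t : ∀ q, ι q → Set ℝ := fun q i => {δ | |δ - δ₀| ≤ ε ∧ ∃ w, |w| ≤ M ∧
    Same lam F (n₀ + q * N) (δ, w) i.1.1 ∧
      |orb F δ w (n₀ + q * N) - i.1.2| ≤ |lam| ^ (n₀ + q * N) * (2 * M)}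
  have hdiam : ∀ q, 1 ≤ q → ∀ i, Metric.ediam (t q i) ≤
      ENNReal.ofReal (K * |lam| ^ (n₀ + q * N)) := by
    intro q hq i
    refine Metric.ediam_le ?_
    rintro δ ⟨h1, w, h2, h3, h4⟩ δ' ⟨h1', w', h2', h3', h4'⟩
    rw [edist_dist]
    apply ENNReal.ofReal_le_ofReal
    rw [Real.dist_eq]
    have hn : 1 ≤ n₀ + q * N := by nlinarith
    generalize n₀ + q * N = n at *
    have e := orb_diff lam F δ δ' w w' n (h3.trans h3'.symm)
    have hg := gs_ge hl1 n hn
    have e2 : |gs lam n| * |δ - δ'| ≤ |lam| ^ n * (6 * M) := by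
      rw [← abs_mul]
      have e3 : gs lam n * (δ - δ') = (orb F δ w n - i.1.2) - (orb F δ' w' n - i.1.2)
        - lam ^ n * (w - w') := by linear_combination -e
      rw [e3]
      have e4 : |lam ^ n * (w - w')| ≤ |lam| ^ n * (2 * M) := by
        rw [abs_mul, abs_pow]
        have : |w - w'| ≤ 2 * M := by
          have := abs_le.1 h2
          have := abs_le.1 h2'
          rw [abs_le]; constructor <;> linarith
        gcongr
      have a1 := abs_le.1 h4
      have a2 := abs_le.1 h4'
      have a3 := abs_le.1 e4
      rw [abs_le]; constructor <;> linarith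
    have hpos : 0 < 1 - |lam| := by linarith
    rw [hK, div_mul_eq_mul_div, le_div_iff₀ hpos]
    have e5 : (1 - |lam|) / 2 * |δ - δ'| ≤ |gs lam n| * |δ - δ'| := by gcongr
    linarith
  have hcov : ∀ q, {δ : ℝ | |δ - δ₀| ≤ ε ∧ Hit lam M F A δ} ⊆ ⋃ i, t q i := by
    rintro q δ ⟨h1, h2⟩
    obtain ⟨w, hw, s, hs, h⟩ := h2 (n₀ + q * N)
    obtain ⟨r, hr, hS⟩ := hRcov q (δ, w) h1 hw
    rw [Set.mem_iUnion]
    refine ⟨⟨(r, s), Finset.mem_product.2 ⟨hr, L.Afin.mem_toFinset.2 hs⟩⟩, h1, w, hw, hS, h⟩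
  have hr0 : Tendsto (fun q : ℕ => ENNReal.ofReal (K * |lam| ^ (n₀ + q * N))) atTop (𝓝 0) := by
    rw [← ENNReal.ofReal_zero]
    apply ENNReal.tendsto_ofReal
    rw [← mul_zero K]
    refine Tendsto.const_mul K ?_
    refine (tendsto_pow_atTop_nhds_zero_of_lt_one hl0.le hl1).comp ?_
    refine tendsto_atTop_mono (fun q => ?_) tendsto_id
    simp only [id]; nlinarith
  have hbound := Measure.hausdorffMeasure_le_liminf_sum (d : ℝ)
    {δ : ℝ | |δ - δ₀| ≤ ε ∧ Hit lam M F A δ} (l := atTop) (ι := ι) _ hr0 t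
    (by filter_upwards [eventually_ge_atTop 1] with q hq using hdiam q hq)
    (Eventually.of_forall hcov)
  refine dimH_le_of_hausdorffMeasure_ne_top (ne_top_of_le_ne_top ?_ (hbound.trans
    (c := ENNReal.ofReal (m₀ * L.Afin.toFinset.card * K ^ (d:ℝ))) ?_))
  · exact ENNReal.ofReal_ne_top
  · refine liminf_le_of_frequently_le' (Eventually.frequently ?_)
    filter_upwards [eventually_ge_atTop 1] with q hq
    have hdpos : (0:ℝ) < d := by exact_mod_cast hd
    calc ∑ i, Metric.ediam (t q i) ^ (d:ℝ)
        ≤ ∑ i : ι q, (ENNReal.ofReal (K * |lam| ^ (n₀ + q * N))) ^ (d:ℝ) := by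
          refine Finset.sum_le_sum fun i _ => ?_
          exact ENNReal.rpow_le_rpow (hdiam q hq i) hdpos.le
      _ = ENNReal.ofReal (((R q).card * L.Afin.toFinset.card : ℕ) *
            (K * |lam| ^ (n₀ + q * N)) ^ (d:ℝ)) := by
          rw [Finset.sum_const, nsmul_eq_mul, ENNReal.ofReal_rpow_of_nonneg (by positivity) hdpos.le,
            ENNReal.ofReal_mul (by positivity), ENNReal.ofReal_natCast]
          congr 2
          simp [ι]
      _ ≤ _ := by
          apply ENNReal.ofReal_le_ofReal
          rw [Real.mul_rpow hK0 (by positivity)]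
          have e1 : (|lam| ^ (n₀ + q * N)) ^ (d:ℝ) = (|lam| ^ (d:ℝ)) ^ (n₀ + q * N) := by
            rw [← Real.rpow_natCast, ← Real.rpow_mul hl0.le, mul_comm, Real.rpow_mul hl0.le,
              Real.rpow_natCast]
          have hb0 : 0 ≤ |lam| ^ (d:ℝ) := by positivity
          have hb1 : |lam| ^ (d:ℝ) ≤ 1 := Real.rpow_le_one hl0.le hl1.le hdpos.le
          have e2 : (|lam| ^ (d:ℝ)) ^ (n₀ + q * N) ≤ (1/2) ^ q := by
            rw [pow_add, mul_comm q N, pow_mul]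
            calc _ ≤ 1 * (1/2 : ℝ) ^ q := by
                  gcongr
                  exact pow_le_one₀ hb0 hb1
              _ = _ := one_mul _
          rw [e1]
          have hc : ((R q).card : ℝ) ≤ m₀ * 2 ^ q := by exact_mod_cast hRc q
          push_cast
          calc _ ≤ ((m₀ * 2 ^ q) * L.Afin.toFinset.card : ℝ) * (K ^ (d:ℝ) * (1/2) ^ q) := by
                gcongr
            _ = (m₀ * L.Afin.toFinset.card * K ^ (d:ℝ)) * (2 ^ q * (1/2) ^ q) := by ring
            _ = _ := by rw [← mul_pow]; norm_num

lemma reach_finite (lam δ : ℝ) {T A : Set ℝ} (hT : T.Finite) (hA : A.Finite) (n : ℕ) :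
    (reach lam δ T A n).Finite := by
  induction n with
  | zero => exact hA
  | succ n ih => exact ih.image2 _ hT

lemma reach_countable (lam δ : ℝ) {T A : Set ℝ} (hT : T.Countable) (hA : A.Countable) (n : ℕ) :
    (reach lam δ T A n).Countable := by
  induction n with
  | zero => exact hA
  | succ n ih => exact ih.image2 hT _

lemma reach_mono (lam δ : ℝ) {T A T' A' : Set ℝ} (hT : T ⊆ T') (hA : A ⊆ A') (n : ℕ) :
    reach lam δ T A n ⊆ reach lam δ T' A' n := by
  induction n with
  | zero => exact hA
  | succ n ih => exact Set.image2_subset ih hT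

lemma reach_zero_mem (lam δ : ℝ) (T A : Set ℝ) (n : ℕ) :
    ∀ v ∈ reach lam δ T A n, v - gs lam n * δ ∈ reach lam 0 T A n := by
  induction n with
  | zero => intro v hv; rw [gs_zero, zero_mul, sub_zero]; exact hv
  | succ n ih =>
    rintro _ ⟨x, hx, t, ht, rfl⟩
    refine ⟨_, ih x hx, t, ht, ?_⟩
    simp only
    rw [gs_succ]; ring

/-- Parameters with a singular connection. -/
def Bad (lam : ℝ) (T A : Set ℝ) : Set ℝ :=
  {δ | ∃ j, 1 ≤ j ∧ ∃ s ∈ A, s ∈ reach lam δ T A j}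

lemma bad_countable {lam : ℝ} (hl : |lam| < 1) {T A : Set ℝ} (hT : T.Countable)
    (hA : A.Countable) : (Bad lam T A).Countable := by
  have : Bad lam T A ⊆ ⋃ j : ℕ, Set.image2 (fun s v => (s - v) / gs lam j) A
      (reach lam 0 T A j) := by
    rintro δ ⟨j, hj, s, hs, hr⟩
    rw [Set.mem_iUnion]
    refine ⟨j, s, hs, _, reach_zero_mem lam δ T A j s hr, ?_⟩
    have h := gs_ge hl j hj
    have hne : gs lam j ≠ 0 := by
      intro h0
      rw [h0, abs_zero] at h
      linarith
    simp only
    field_simp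
    ring
  refine Set.Countable.mono this (Set.countable_iUnion fun j => ?_)
  exact hA.image2 (reach_countable _ _ hT hA j) _

lemma exists_quant {lam M : ℝ} {F : ℝ → ℝ} {T A : Set ℝ} (L : Loc lam M F T A) (N : ℕ)
    {δ₀ : ℝ} (hM : |δ₀| + 2 ≤ M) (hb : δ₀ ∉ Bad lam T A) :
    ∃ ρ ε, Quant lam M T A N δ₀ ρ ε := by
  have hl1 := L.l1
  have ev : ∀ x : ℝ, 0 < x → ∀ᶠ ρ in 𝓝[>] (0:ℝ), 3 * ρ < x := by
    intro x hx
    filter_upwards [Ioo_mem_nhdsGT (show (0:ℝ) < x / 3 by positivity)] with ρ hρ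
    linarith [hρ.2]
  have e1 : ∀ᶠ ρ in 𝓝[>] (0:ℝ), ∀ s ∈ A, ∀ s' ∈ A, s ≠ s' → 3 * ρ < |s - s'| := by
    rw [Filter.eventually_all_finite L.Afin]
    intro s hs
    rw [Filter.eventually_all_finite L.Afin]
    intro s' hs'
    by_cases h : s = s'
    · simp [h]
    · filter_upwards [ev |s - s'| (abs_pos.2 (sub_ne_zero.2 h))] with ρ hρ _ using hρ
  have e2 : ∀ᶠ ρ in 𝓝[>] (0:ℝ), ∀ j ∈ Set.Icc 1 N, ∀ v ∈ reach lam δ₀ T A j, ∀ s ∈ A,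
      3 * ρ < |v - s| := by
    rw [Filter.eventually_all_finite (Set.finite_Icc 1 N)]
    intro j hj
    rw [Filter.eventually_all_finite (reach_finite _ _ L.Tfin L.Afin j)]
    intro v hv
    rw [Filter.eventually_all_finite L.Afin]
    intro s hs
    refine ev _ (abs_pos.2 (sub_ne_zero.2 ?_))
    rintro rfl
    exact hb ⟨j, hj.1, v, hs, hv⟩
  obtain ⟨ρ, h1, h2, h3, h4⟩ := (e1.and (e2.and ((ev 1 one_pos).and self_mem_nhdsWithin))).exists
  have hρ : 0 < ρ := h4
  have hpos : 0 < 1 - |lam| := by linarith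
  refine ⟨ρ, (1 - |lam|) * ρ / 4, hρ, by positivity, ?_, by linarith, h1, ?_⟩
  · have := L.l0
    nlinarith
  · intro j hj1 hj2
    exact h2 j ⟨hj1, hj2⟩

lemma dim_nhd {lam M : ℝ} {F : ℝ → ℝ} {T A : Set ℝ} (L : Loc lam M F T A)
    {δ₀ : ℝ} (hM : |δ₀| + 2 ≤ M) (hb : δ₀ ∉ Bad lam T A) (d : ℝ≥0) (hd : 0 < d) :
    ∃ ε, 0 < ε ∧ |δ₀| + ε + 1 ≤ M ∧ dimH {δ : ℝ | |δ - δ₀| ≤ ε ∧ Hit lam M F A δ} ≤ d := by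
  have hdpos : (0:ℝ) < d := by exact_mod_cast hd
  have ht : Tendsto (fun n : ℕ => (|lam| ^ (d:ℝ)) ^ n) atTop (𝓝 0) :=
    tendsto_pow_atTop_nhds_zero_of_lt_one (by positivity)
      (Real.rpow_lt_one (abs_nonneg _) L.l1 hdpos)
  obtain ⟨N, h1, h2⟩ := ((ht.eventually (gt_mem_nhds (show (0:ℝ) < 1/2 by norm_num))).and
    (eventually_ge_atTop 1)).exists
  obtain ⟨ρ, ε, Q⟩ := exists_quant L N hM hb
  exact ⟨ε, Q.ε0, Q.hM, dim_local_s19 L Q d hd h2 h1.le⟩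

/-! Asymptotic periodicity of non-hitting parameters. -/

lemma not_hit {lam M : ℝ} {F : ℝ → ℝ} {A : Set ℝ} {δ : ℝ}
    (h : ¬ Hit lam M F A δ) :
    ∃ n, ∀ w, |w| ≤ M → ∀ s ∈ A, |lam| ^ n * (2 * M) < |orb F δ w n - s| := by
  unfold Hit at h
  push Not at h
  exact h

lemma same_forever {lam M : ℝ} {F : ℝ → ℝ} {T A : Set ℝ} (L : Loc lam M F T A) {δ : ℝ}
    (hδ : |δ| + 1 ≤ M) {n : ℕ}
    (hn : ∀ w, |w| ≤ M → ∀ s ∈ A, |lam| ^ n * (2 * M) < |orb F δ w n - s|)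
    {w w' : ℝ} (hw : |w| ≤ M) (hw' : |w'| ≤ M) (hS : Same lam F n (δ, w) (δ, w')) (m : ℕ) :
    Same lam F m (δ, w) (δ, w') := by
  have step : ∀ u u' : ℝ, |u| ≤ M → |u'| ≤ M → Same lam F n (δ, u) (δ, u') →
      dgt lam F (orb F δ u n) = dgt lam F (orb F δ u' n) := by
    intro u u' hu hu' h
    by_contra hne
    obtain ⟨s, hs, hb⟩ := sep_abs L (orb_mem L hδ hu n) (orb_mem L hδ hu' n) hne
    have e := orb_diff lam F δ δ u u' n h
    have h1 : |orb F δ u n - orb F δ u' n| ≤ |lam| ^ n * (2 * M) := by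
      rw [e, sub_self, mul_zero, add_zero, abs_mul, abs_pow]
      have : |u - u'| ≤ 2 * M := by
        have := abs_le.1 hu
        have := abs_le.1 hu'
        rw [abs_le]; constructor <;> linarith
      gcongr
    have h2 := hn u hu s hs
    have h3 := abs_le.1 h1
    have : |orb F δ u n - s| ≤ |lam| ^ n * (2 * M) := by
      rw [abs_le]
      rcases hb with hb | hb <;> constructor <;> linarith
    linarith
  have all : ∀ j, dgt lam F (orb F δ w j) = dgt lam F (orb F δ w' j) := by
    intro j
    induction j using Nat.strong_induction_on with
    | _ j ih =>
      rcases lt_or_ge j n with hj | hj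
      · exact hS j hj
      · have := step (orb F δ w (j - n)) (orb F δ w' (j - n)) (orb_mem L hδ hw _)
          (orb_mem L hδ hw' _) (by
            intro i hi
            simp only [orb_add]
            exact ih _ (by omega))
        simp only [orb_add] at this
        rwa [show j - n + n = j by omega] at this
  exact fun j _ => all j

lemma same_dist {lam M : ℝ} {F : ℝ → ℝ} {δ : ℝ} {w w' : ℝ} (hw : |w| ≤ M) (hw' : |w'| ≤ M)
    {m : ℕ} (hS : Same lam F m (δ, w) (δ, w')) :
    |orb F δ w m - orb F δ w' m| ≤ |lam| ^ m * (2 * M) := by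
  rw [orb_diff lam F δ δ w w' m hS, sub_self, mul_zero, add_zero, abs_mul, abs_pow]
  have : |w - w'| ≤ 2 * M := by
    have := abs_le.1 hw
    have := abs_le.1 hw'
    rw [abs_le]; constructor <;> linarith
  gcongr

lemma word_finite {lam M : ℝ} {F : ℝ → ℝ} {T A : Set ℝ} (L : Loc lam M F T A) {δ : ℝ}
    (hδ : |δ| + 1 ≤ M) (n : ℕ) :
    ((fun w => fun j : Fin n => dgt lam F (orb F δ w j)) '' {w | |w| ≤ M}).Finite := by
  refine (Set.Finite.pi (fun _ : Fin n => L.Tfin)).subset ?_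
  rintro _ ⟨w, hw, rfl⟩ j _
  exact L.hT _ (orb_mem L hδ hw j)

/-- Finitely many periodic points. -/
lemma per_finite {lam M : ℝ} {F : ℝ → ℝ} {T A : Set ℝ} (L : Loc lam M F T A) {δ : ℝ}
    (hδ : |δ| + 1 ≤ M) {n : ℕ}
    (hn : ∀ w, |w| ≤ M → ∀ s ∈ A, |lam| ^ n * (2 * M) < |orb F δ w n - s|) :
    {w | |w| ≤ M ∧ ∃ p, 1 ≤ p ∧ orb F δ w p = w}.Finite := by
  refine Set.Finite.of_finite_image
    (f := fun w => fun j : Fin n => dgt lam F (orb F δ w j)) ?_ ?_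
  · refine (word_finite L hδ n).subset (Set.image_mono ?_)
    exact fun w hw => hw.1
  · rintro w ⟨hw, p, hp, hwp⟩ w' ⟨hw', p', hp', hwp'⟩ heq
    have hS : Same lam F n (δ, w) (δ, w') := fun j hj => congrFun heq ⟨j, hj⟩
    have hall := same_forever L hδ hn hw hw' hS
    have hper : ∀ (u : ℝ) (q : ℕ), orb F δ u q = u → ∀ m : ℕ, orb F δ u (m * q) = u := by
      intro u q hq m
      induction m with
      | zero => simp [orb_zero]
      | succ m ih => rw [Nat.succ_mul, ← orb_add, ih, hq]
    have hb : ∀ m : ℕ, |w - w'| ≤ |lam| ^ m * (2 * M) := by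
      intro m
      have := same_dist hw hw' (hall (m * (p * p')))
      rw [show m * (p * p') = (m * p') * p by ring, hper w p hwp,
        show m * p' * p = (m * p) * p' by ring, hper w' p' hwp'] at this
      refine this.trans ?_
      have hM : 0 ≤ M := (abs_nonneg w).trans hw
      have h1 : m ≤ m * p * p' := by
        rw [mul_assoc]; exact Nat.le_mul_of_pos_right _ (Nat.mul_pos hp hp')
      have := pow_le_pow_of_le_one L.l0.le L.l1.le h1
      gcongr
    have ht : Tendsto (fun m : ℕ => |lam| ^ m * (2 * M)) atTop (𝓝 (0 * (2 * M))) :=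
      (tendsto_pow_atTop_nhds_zero_of_lt_one L.l0.le L.l1).mul_const _
    rw [zero_mul] at ht
    have := ge_of_tendsto' ht hb
    have h0 := abs_nonneg (w - w')
    exact sub_eq_zero.1 (abs_eq_zero.1 (le_antisymm this h0))

/-- Each orbit converges to a periodic orbit away from `A`. -/
lemma conv_per {lam M : ℝ} {F : ℝ → ℝ} {T A : Set ℝ} (L : Loc lam M F T A) {δ : ℝ}
    (hδ : |δ| + 1 ≤ M) {n : ℕ}
    (hn : ∀ w, |w| ≤ M → ∀ s ∈ A, |lam| ^ n * (2 * M) < |orb F δ w n - s|)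
    {w : ℝ} (hw : |w| ≤ M) :
    ∃ z i p, 1 ≤ p ∧ |z| ≤ M ∧ orb F δ z p = z ∧ (∀ j, orb F δ z j ∉ A) ∧
      ∀ j, Tendsto (fun m : ℕ => orb F δ w (i + (m * p + j))) atTop (𝓝 (orb F δ z j)) := by
  classical
  have hM : 0 < M := by
    have := abs_nonneg δ
    linarith
  have hl0 := L.l0
  obtain ⟨i, i', hii, heq⟩ : ∃ i i' : ℕ, i < i' ∧
      (fun j : Fin n => dgt lam F (orb F δ (orb F δ w i) j)) =
      (fun j : Fin n => dgt lam F (orb F δ (orb F δ w i') j)) := by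
    have hmt : Set.MapsTo (fun i : ℕ => fun j : Fin n => dgt lam F (orb F δ (orb F δ w i) j))
        Set.univ ((fun w => fun j : Fin n => dgt lam F (orb F δ w j)) '' {w | |w| ≤ M}) :=
      fun i _ => ⟨orb F δ w i, orb_mem L hδ hw i, rfl⟩
    obtain ⟨i, -, i', -, hlt, h⟩ := Set.infinite_univ.exists_lt_map_eq_of_mapsTo hmt
      (word_finite L hδ n)
    exact ⟨i, i', hlt, h⟩
  set p := i' - i with hp
  have hp1 : 1 ≤ p := by omega
  set u := orb F δ w i with hu
  have hum : |u| ≤ M := orb_mem L hδ hw i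
  have hS : Same lam F n (δ, u) (δ, orb F δ u p) := by
    intro j hj
    have := congrFun heq ⟨j, hj⟩
    simp only at this ⊢
    rw [this, hu, orb_add F δ w i p, show i + p = i' by omega]
  have hall := same_forever L hδ hn hum (orb_mem L hδ hum p) hS
  have hdist : ∀ m : ℕ, |orb F δ u m - orb F δ u (m + p)| ≤ |lam| ^ m * (2 * M) := by
    intro m
    have := same_dist hum (orb_mem L hδ hum p) (hall m)
    rwa [orb_add F δ u p m, add_comm p m] at this
  have hcau : CauchySeq (fun m : ℕ => orb F δ u (m * p)) := by
    refine cauchySeq_of_le_geometric (|lam|) (2 * M) L.l1 ?_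
    intro m
    rw [Real.dist_eq, Nat.succ_mul]
    refine (hdist (m * p)).trans ?_
    rw [mul_comm]
    have := pow_le_pow_of_le_one hl0.le L.l1.le (Nat.le_mul_of_pos_right m hp1)
    gcongr
  obtain ⟨z, hz⟩ := cauchySeq_tendsto_of_complete hcau
  have hbd : ∀ j : ℕ, ∀ y, Tendsto (fun m : ℕ => orb F δ u (m * p + j)) atTop (𝓝 y) →
      |y| ≤ M := by
    intro j y hy
    exact le_of_tendsto' hy.abs (fun m => orb_mem L hδ hum _)
  have haway : ∀ j : ℕ, ∀ y, Tendsto (fun m : ℕ => orb F δ u (m * p + j)) atTop (𝓝 y) →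
      ∀ s ∈ A, |lam| ^ n * (2 * M) ≤ |y - s| := by
    intro j y hy s hs
    refine ge_of_tendsto (hy.sub_const s).abs ?_
    filter_upwards [eventually_ge_atTop n] with m hm
    have hmn : n ≤ m * p + j := by nlinarith
    have := hn (orb F δ u (m * p + j - n)) (orb_mem L hδ hum _) s hs
    rw [orb_add, show m * p + j - n + n = m * p + j by omega] at this
    exact this.le
  have hpos : 0 < |lam| ^ n * (2 * M) := by positivity
  have hconv : ∀ j : ℕ, Tendsto (fun m : ℕ => orb F δ u (m * p + j)) atTop
      (𝓝 (orb F δ z j)) := by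
    intro j
    induction j with
    | zero => simpa [orb_zero] using hz
    | succ j ih =>
      have hy := hbd j _ ih
      have ha := haway j _ ih
      have hev : ∀ᶠ m : ℕ in atTop, dgt lam F (orb F δ u (m * p + j)) =
          dgt lam F (orb F δ z j) := by
        filter_upwards [Metric.tendsto_nhds.1 ih _ hpos] with m hm
        rw [Real.dist_eq] at hm
        by_contra hne
        obtain ⟨s, hs, hb⟩ := sep_abs L (orb_mem L hδ hum _) hy hne
        have h1 := ha s hs
        have h2 := abs_lt.1 hm
        have : |orb F δ z j - s| < |lam| ^ n * (2 * M) := by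
          rw [abs_lt]
          rcases hb with hb | hb <;> constructor <;> linarith
        linarith
      have e : orb F δ z (j + 1) = lam * orb F δ z j + dgt lam F (orb F δ z j) + δ := by
        rw [orb_succ]; unfold dgt; ring
      rw [e]
      have ht : Tendsto (fun m : ℕ => lam * orb F δ u (m * p + j) + dgt lam F (orb F δ z j) + δ)
          atTop (𝓝 (lam * orb F δ z j + dgt lam F (orb F δ z j) + δ)) :=
        ((ih.const_mul lam).add_const _).add_const _
      refine ht.congr' ?_
      filter_upwards [hev] with m hm
      rw [← hm, ← add_assoc, orb_succ]; unfold dgt; ring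
  refine ⟨z, i, p, hp1, ?_, ?_, ?_, ?_⟩
  · exact hbd 0 z (by simpa using hz)
  · have h1 := hconv p
    have h2 : Tendsto (fun m : ℕ => orb F δ u (m * p + p)) atTop (𝓝 z) := by
      have := hz.comp (tendsto_add_atTop_nat 1)
      refine this.congr fun m => ?_
      simp [Nat.succ_mul]
    exact tendsto_nhds_unique h1 h2
  · intro j hj
    have := haway j _ (hconv j) _ hj
    rw [sub_self, abs_zero] at this
    linarith
  · intro j
    refine (hconv j).congr fun m => ?_
    rw [hu, orb_add]

lemma cluster_eq {y v : ℕ → ℝ} {i p : ℕ} (hp : 1 ≤ p)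
    (h : ∀ j, Tendsto (fun m : ℕ => y (i + (m * p + j))) atTop (𝓝 (v j))) :
    {x | MapClusterPt x atTop y} = Set.range (fun j : Fin p => v j) := by
  ext x
  simp only [Set.mem_ofPred_eq]
  constructor
  · intro hx
    by_contra hne
    have hopen : (Set.range (fun j : Fin p => v j))ᶜ ∈ 𝓝 x :=
      (Set.finite_range _).isClosed.isOpen_compl.mem_nhds hne
    obtain ⟨r, hr, hsub⟩ := Metric.nhds_basis_closedBall.mem_iff.1 hopen
    have hev : ∀ᶠ m : ℕ in atTop, ∀ j : Fin p, y (i + (m * p + j)) ∉ Metric.closedBall x r := by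
      rw [Filter.eventually_all]
      intro j
      refine (h j).eventually (Metric.isClosed_closedBall.isOpen_compl.mem_nhds ?_)
      intro hj
      exact hsub hj ⟨j, rfl⟩
    obtain ⟨m₀, hm₀⟩ := eventually_atTop.1 hev
    have hfr := (mapClusterPt_iff_frequently.1 hx) _ (Metric.closedBall_mem_nhds x hr)
    obtain ⟨n, hn, hy⟩ := (frequently_atTop.1 hfr) (i + m₀ * p)
    have h1 : m₀ ≤ (n - i) / p := by
      rw [Nat.le_div_iff_mul_le (by omega)]; omega
    refine hm₀ _ h1 ⟨(n - i) % p, Nat.mod_lt _ (by omega)⟩ ?_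
    have h2 : i + ((n - i) / p * p + (n - i) % p) = n := by
      rw [Nat.div_add_mod' (n - i) p]; omega
    simp only
    rw [h2]
    exact hy
  · rintro ⟨j, rfl⟩
    have hφ : Tendsto (fun m : ℕ => i + (m * p + (j : ℕ))) atTop atTop := by
      refine tendsto_atTop_mono (fun m => ?_) tendsto_id
      simp only [id]; nlinarith
    exact MapClusterPt.of_comp hφ (h j).mapClusterPt

lemma iter_fract (f : ℝ → ℝ) (δ w : ℝ) (n : ℕ) :
    (fun x => Int.fract (f x + δ))^[n] (Int.fract w) =
      Int.fract (orb (fun x => f (Int.fract x)) δ w n) := by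
  induction n with
  | zero => rfl
  | succ n ih => rw [Function.iterate_succ_apply', ih, orb_succ]

lemma orb_fract (f : ℝ → ℝ) (δ w : ℝ) (n : ℕ) (hn : 1 ≤ n) :
    orb (fun x => f (Int.fract x)) δ (Int.fract w) n = orb (fun x => f (Int.fract x)) δ w n := by
  obtain ⟨n, rfl⟩ := Nat.exists_eq_add_of_le hn
  rw [← orb_add, ← orb_add]
  congr 1
  simp [orb]

lemma asymp_of_not_hit {lam M : ℝ} {f : ℝ → ℝ} {T A : Set ℝ}
    (L : Loc lam M (fun x => f (Int.fract x)) T A) (hA : ∀ m : ℤ, |(m:ℝ)| ≤ M → (m:ℝ) ∈ A)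
    {δ : ℝ} (hδ : |δ| + 1 ≤ M) (h : ¬ Hit lam M (fun x => f (Int.fract x)) A δ) :
    AsympPeriodicOn (fun x => Int.fract (f x + δ)) (Set.Ico (0:ℝ) 1) := by
  obtain ⟨n, hn⟩ := not_hit h
  have hI : ∀ x ∈ Set.Ico (0:ℝ) 1, |x| ≤ M := by
    intro x hx
    have := abs_nonneg δ
    rw [abs_of_nonneg hx.1]; linarith [hx.2]
  constructor
  · refine ((per_finite L hδ hn).image Int.fract).subset ?_
    rintro x ⟨hx, p, hp, hxp⟩
    have hfx : Int.fract x = x := Int.fract_eq_self.2 hx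
    have h1 := iter_fract f δ x p
    rw [hfx, hxp] at h1
    refine ⟨orb (fun x => f (Int.fract x)) δ x p, ⟨orb_mem L hδ (hI x hx) p, p, hp, ?_⟩, h1.symm⟩
    rw [← orb_fract f δ _ p hp, ← h1]
  · intro x hx
    have hfx : Int.fract x = x := Int.fract_eq_self.2 hx
    obtain ⟨z, i, p, hp, hz, hzp, hzA, hconv⟩ := conv_per L hδ hn (hI x hx)
    refine ⟨Int.fract z, p, hp, ?_, ?_⟩
    · rw [iter_fract, hzp]
    · unfold omegaLimitPt
      have := cluster_eq (y := fun n => (fun x => Int.fract (f x + δ))^[n] x)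
        (v := fun j => (fun x => Int.fract (f x + δ))^[j] (Int.fract z)) (i := i) hp ?_
      · exact this
      · intro j
        rw [iter_fract]
        have hz' : |orb (fun x => f (Int.fract x)) δ z j| ≤ M := orb_mem L hδ hz j
        have hc : ContinuousAt (Int.fract : ℝ → ℝ) (orb (fun x => f (Int.fract x)) δ z j) := by
          apply continuousAt_fract
          intro he
          apply hzA j
          rw [he]
          apply hA
          rw [← he]
          exact hz'
        refine (hc.tendsto.comp (hconv j)).congr fun m => ?_
        simp only [Function.comp]
        rw [← iter_fract, hfx]

lemma exists_branch (k : ℕ) (a : Fin (k+1) → ℝ) (x : ℝ)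
    (h0 : a 0 ≤ x) (h1 : x < a (Fin.last k)) :
    ∃ i : Fin k, a i.castSucc ≤ x ∧ x < a i.succ := by
  by_contra hc
  push Not at hc
  have : ∀ i : Fin (k+1), a i ≤ x := by
    intro i
    induction i using Fin.induction with
    | zero => exact h0
    | succ i ih => exact hc i ih
  linarith [this (Fin.last k)]

/-- All breakpoints. -/
def Aset (k : ℕ) (a : Fin (k+1) → ℝ) (S : Set ℤ) : Set ℝ :=
  Set.image2 (fun (i : Fin (k+1)) (m : ℤ) => a i + m) Set.univ S

/-- All digits. -/
def Tset (lam : ℝ) (k : ℕ) (b : Fin k → ℝ) (S : Set ℤ) : Set ℝ :=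
  Set.image2 (fun (i : Fin k) (m : ℤ) => b i - lam * m) Set.univ S

lemma floor_mem (M : ℕ) (w : ℝ) (hw : |w| ≤ M) : ⌊w⌋ ∈ Set.Icc (-(M:ℤ)) M := by
  have := abs_le.1 hw
  constructor
  · rw [Int.le_floor]; push_cast; exact this.1
  · have h1 := Int.floor_le w
    have : (⌊w⌋ : ℝ) ≤ ((M : ℤ) : ℝ) := by push_cast; linarith [this.2]
    exact_mod_cast this

lemma mkLoc (lam : ℝ) (hlam0 : lam ≠ 0) (hlam : |lam| < 1)
    (k : ℕ) (a : Fin (k+1) → ℝ)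
    (ha0 : a 0 = 0) (hak : a (Fin.last k) = 1) (b : Fin k → ℝ) (f : ℝ → ℝ)
    (hf : ∀ i : Fin k, ∀ x ∈ Set.Ico (a i.castSucc) (a i.succ), f x = lam * x + b i)
    (hmaps : Set.MapsTo f (Set.Ico 0 1) (Set.Ico 0 1)) (M : ℕ) :
    Loc lam M (fun x => f (Int.fract x)) (Tset lam k b (Set.Icc (-(M:ℤ)) M))
      (Aset k a (Set.Icc (-(M:ℤ)) M)) := by
  have hbr : ∀ w : ℝ, ∃ i : Fin k, a i.castSucc ≤ Int.fract w ∧ Int.fract w < a i.succ := by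
    intro w
    apply exists_branch
    · rw [ha0]; exact Int.fract_nonneg w
    · rw [hak]; exact Int.fract_lt_one w
  have hd : ∀ w (i : Fin k), a i.castSucc ≤ Int.fract w → Int.fract w < a i.succ →
      dgt lam (fun x => f (Int.fract x)) w = b i - lam * ⌊w⌋ := by
    intro w i h1 h2
    unfold dgt
    simp only
    rw [hf i _ ⟨h1, h2⟩]
    have := Int.fract_add_floor w
    linear_combination lam * this
  refine ⟨abs_pos.2 hlam0, hlam, ?_, ?_, ?_, ?_, ?_, ?_⟩
  · exact Set.finite_univ.image2 _ (Set.finite_Icc _ _)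
  · exact Set.finite_univ.image2 _ (Set.finite_Icc _ _)
  · intro w hw
    obtain ⟨i, h1, h2⟩ := hbr w
    rw [hd w i h1 h2]
    exact ⟨i, Set.mem_univ _, _, floor_mem M w hw, rfl⟩
  · intro u v hu hv huv hne
    by_contra hc
    push Not at hc
    apply hne
    have hfl : ⌊v⌋ ≤ ⌊u⌋ := by
      rw [Int.le_floor]
      by_contra hcon
      push Not at hcon
      have := hc _ ⟨0, Set.mem_univ _, ⌊v⌋, floor_mem M v hv, rfl⟩ (by simpa [ha0] using hcon)
      simp only [ha0, zero_add] at this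
      linarith [Int.floor_le v]
    have hfl' : ⌊u⌋ = ⌊v⌋ := le_antisymm (Int.floor_mono huv) hfl
    obtain ⟨i, h1, h2⟩ := hbr v
    have eu := Int.fract_add_floor u
    have ev := Int.fract_add_floor v
    rw [hfl'] at eu
    have h3 : a i.castSucc ≤ Int.fract u := by
      by_contra hcon
      push Not at hcon
      have := hc _ ⟨i.castSucc, Set.mem_univ _, ⌊v⌋, floor_mem M v hv, rfl⟩ (by linarith)
      linarith
    rw [hd u i h3 (by linarith), hd v i h1 h2, hfl']
  · intro w
    exact (hmaps ⟨Int.fract_nonneg w, Int.fract_lt_one w⟩).1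
  · intro w
    exact (hmaps ⟨Int.fract_nonneg w, Int.fract_lt_one w⟩).2

/-- Theorem A -/
theorem stmt19 (lam : ℝ) (hlam0 : lam ≠ 0) (hlam : |lam| < 1)
    (k : ℕ) (hk : 1 ≤ k) (a : Fin (k+1) → ℝ) (ha : StrictMono a)
    (ha0 : a 0 = 0) (hak : a (Fin.last k) = 1) (b : Fin k → ℝ) (f : ℝ → ℝ)
    (hf : ∀ i : Fin k, ∀ x ∈ Set.Ico (a i.castSucc) (a i.succ), f x = lam * x + b i)
    (hmaps : Set.MapsTo f (Set.Ico 0 1) (Set.Ico 0 1)) :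
    dimH {δ : ℝ |
      ¬ AsympPeriodicOn (fun x => Int.fract (f x + δ)) (Set.Ico (0:ℝ) 1)} = 0 := by
  by_contra hne
  have hpos : 0 < dimH {δ : ℝ |
      ¬ AsympPeriodicOn (fun x => Int.fract (f x + δ)) (Set.Ico (0:ℝ) 1)} := pos_iff_ne_zero.2 hne
  set E := {δ : ℝ | ¬ AsympPeriodicOn (fun x => Int.fract (f x + δ)) (Set.Ico (0:ℝ) 1)} with hE
  set B := Bad lam (Tset lam k b Set.univ) (Aset k a Set.univ) with hB
  have hBc : B.Countable := bad_countable hlam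
    (Set.countable_univ.image2 Set.countable_univ _) (Set.countable_univ.image2 Set.countable_univ _)
  have hpos' : 0 < dimH (E \ B) := by
    have h1 : dimH E ≤ dimH ((E \ B) ∪ B) := dimH_mono (by
      intro x hx
      by_cases h : x ∈ B
      · exact Or.inr h
      · exact Or.inl ⟨hx, h⟩)
    rw [dimH_union, dimH_countable hBc] at h1
    simpa using hpos.trans_le h1
  obtain ⟨d, hd0, hd1⟩ := ENNReal.lt_iff_exists_nnreal_btwn.1 hpos'
  obtain ⟨δ₀, hδ₀, hall⟩ := exists_mem_nhdsWithin_lt_dimH_of_lt_dimH hd1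
  obtain ⟨M, hM⟩ := exists_nat_ge (|δ₀| + 2)
  have L := mkLoc lam hlam0 hlam k a ha0 hak b f hf hmaps M
  have hnb : δ₀ ∉ Bad lam (Tset lam k b (Set.Icc (-(M:ℤ)) M)) (Aset k a (Set.Icc (-(M:ℤ)) M)) := by
    rintro ⟨j, hj, s, hs, hr⟩
    have hA : Aset k a (Set.Icc (-(M:ℤ)) M) ⊆ Aset k a Set.univ :=
      Set.image2_subset_left (Set.subset_univ _)
    have hT : Tset lam k b (Set.Icc (-(M:ℤ)) M) ⊆ Tset lam k b Set.univ :=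
      Set.image2_subset_left (Set.subset_univ _)
    exact hδ₀.2 ⟨j, hj, s, hA hs, reach_mono lam δ₀ hT hA j hr⟩
  obtain ⟨ε, hε, hεM, hdim⟩ := dim_nhd L hM hnb d (by exact_mod_cast hd0)
  have hmem : (E \ B) ∩ Metric.closedBall δ₀ ε ∈ 𝓝[E \ B] δ₀ :=
    inter_mem_nhdsWithin _ (Metric.closedBall_mem_nhds _ hε)
  have hlt := hall _ hmem
  refine absurd (dimH_mono ?_) (not_le.2 (hdim.trans_lt hlt))
  rintro δ ⟨⟨hδE, -⟩, hδ⟩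
  have hδ' : |δ - δ₀| ≤ ε := by rwa [Metric.mem_closedBall, Real.dist_eq] at hδ
  refine ⟨hδ', ?_⟩
  by_contra hh
  refine hδE (asymp_of_not_hit L ?_ ?_ hh)
  · intro m hm
    refine ⟨0, Set.mem_univ _, m, ?_, by simp [ha0]⟩
    have := abs_le.1 hm
    constructor
    · exact_mod_cast this.1
    · exact_mod_cast this.2
  · have := abs_sub_abs_le_abs_sub δ δ₀
    linarith
end
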